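/- arXiv:2401.14335 — 6 statements merged into one kernel-verified Lean document; each statement's English description precedes it below -/
import Mathlib

section
/- For every integer m ≥ 122, there exist k, ℓ ≥ 1, distinct primes p₁, …, p_k all congruent to 1 modulo 4, and distinct primes q₁, …, q_ℓ all congruent to 3 modulo 4, such that m = p₁ + ⋯ + p_k = q₁ + ⋯ + q_ℓ. -/
/-!
Fix a class `a` modulo `4`, `a = 1` or `a = 3`. If all integers of an interval `[c, c + w)` are
sums of distinct primes of the class below `n`, and `n ≤ w` is itself such a prime, then all
integers of `[c, c + w + n)` are sums of distinct primes of the class up to `n` (Richert). So the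
interval, found by computation at some `n₀`, grows forever provided that no later prime `n` of the
class exceeds `w` plus the sum of the primes of the class in `[n₀, n)`.

For `n ≤ 2 ^ 32` this follows from an explicit chain of primes of the class, each at most twice the
previous one; they are taken of the form `q + 1` with `q` a `13`-smooth number, which makes Lucas'
primality criterion applicable.

For larger `n` write `s = ⌊√(n - 1)⌋`. Mertens' argument for the character `χ` modulo `4`, with
`L(1, χ) ≥ 2 / 3` read off the alternating series, makes `∑ log p / p` over the primes of the class
in `(8 s, s ^ 2]` at least `log s / 30`. As `log p / p ≤ p * log s / (32 s ^ 2)` for these primes,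
they sum to at least `16 / 15 * s ^ 2 ≥ (s + 1) ^ 2 ≥ n`.
-/

open Finset Real Chebyshev
open scoped ArithmeticFunction.vonMangoldt

/-! ### Intervals of subset sums -/

/-- `m` is the sum of a finite set of natural numbers below `n` with property `P`. -/
def HasSumBelow (P : ℕ → Prop) (n m : ℕ) : Prop :=
  ∃ T : Finset ℕ, (∀ k ∈ T, k < n ∧ P k) ∧ ∑ k ∈ T, k = m

section SubsetSums

variable {P : ℕ → Prop}

theorem hasSumBelow_zero {m : ℕ} : HasSumBelow P 0 m ↔ m = 0 := by
  constructor
  · rintro ⟨T, hT, rfl⟩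
    exact sum_eq_zero fun k hk ↦ absurd (hT k hk).1 k.not_lt_zero
  · rintro rfl
    exact ⟨∅, by simp⟩

theorem HasSumBelow.succ {n m : ℕ} : HasSumBelow P n m → HasSumBelow P (n + 1) m := by
  rintro ⟨T, hT, hsum⟩
  exact ⟨T, fun k hk ↦ ⟨(hT k hk).1.trans n.lt_add_one, (hT k hk).2⟩, hsum⟩

theorem HasSumBelow.add {n m : ℕ} (hn : P n) :
    HasSumBelow P n m → HasSumBelow P (n + 1) (n + m) := by
  rintro ⟨T, hT, rfl⟩
  have hnT : n ∉ T := fun h ↦ (hT n h).1.false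
  refine ⟨insert n T, forall_mem_insert .. |>.2 ⟨⟨n.lt_add_one, hn⟩, fun k hk ↦ ?_⟩,
    sum_insert hnT⟩
  exact ⟨(hT k hk).1.trans n.lt_add_one, (hT k hk).2⟩

theorem hasSumBelow_succ {n m : ℕ} :
    HasSumBelow P (n + 1) m ↔
      (P n ∧ n ≤ m ∧ HasSumBelow P n (m - n)) ∨ HasSumBelow P n m := by
  constructor
  · rintro ⟨T, hT, rfl⟩
    by_cases hn : n ∈ T
    · refine .inl ⟨(hT n hn).2, single_le_sum (f := id) (by simp) hn, T.erase n, ?_, ?_⟩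
      · grind
      · rw [← add_sum_erase T _ hn, Nat.add_sub_cancel_left]
    · exact .inr ⟨T, by grind, rfl⟩
  · rintro (⟨hn, hle, h⟩ | h)
    · simpa [hle] using h.add hn
    · exact h.succ

/-- The binary encoding of the sums of sets of elements of `P` below `n`: bit `m` is set exactly
when `m` is such a sum. -/
def sumMask (P : ℕ → Prop) [DecidablePred P] : ℕ → ℕ
  | 0 => 1
  | n + 1 => if P n then sumMask P n <<< n ||| sumMask P n else sumMask P n

theorem testBit_sumMask [DecidablePred P] {n m : ℕ} :
    (sumMask P n).testBit m ↔ HasSumBelow P n m := by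
  induction n generalizing m with
  | zero => rw [sumMask, hasSumBelow_zero, Nat.testBit_one_eq_true_iff_self_eq_zero]
  | succ n ih =>
    rw [hasSumBelow_succ, ← ih, ← ih, sumMask]
    split_ifs with hn <;> simp [hn, Nat.testBit_shiftLeft]

instance [DecidablePred P] (n m : ℕ) : Decidable (HasSumBelow P n m) :=
  decidable_of_iff _ testBit_sumMask

/-- The length of the interval of sums reached once the elements of `P` in `[n₀, n)` extend an
interval of length `w`. -/
def windowLength (P : ℕ → Prop) [DecidablePred P] (n₀ w n : ℕ) : ℕ :=
  w + ∑ k ∈ Ico n₀ n with P k, k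

variable [DecidablePred P] {n₀ w : ℕ}

theorem windowLength_succ {n : ℕ} (hn : n₀ ≤ n) :
    windowLength P n₀ w (n + 1) = windowLength P n₀ w n + if P n then n else 0 := by
  rw [windowLength, windowLength, sum_filter, sum_filter, sum_Ico_succ_top hn, add_assoc]

theorem windowLength_mono {m n : ℕ} (hmn : m ≤ n) :
    windowLength P n₀ w m ≤ windowLength P n₀ w n :=
  Nat.add_le_add_left
    (sum_le_sum_of_subset (filter_subset_filter P (Ico_subset_Ico_right hmn))) w

theorem hasSumBelow_of_lt_windowLength {c : ℕ}
    (hbase : ∀ m ∈ Ico c (c + w), HasSumBelow P n₀ m)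
    (hgrowth : ∀ n ≥ n₀, n ≤ windowLength P n₀ w n) {n m : ℕ} (hn : n₀ ≤ n) (hcm : c ≤ m)
    (hm : m < c + windowLength P n₀ w n) : HasSumBelow P n m := by
  induction n, hn using Nat.le_induction generalizing m with
  | base => exact hbase m (mem_Ico.2 ⟨hcm, by simpa [windowLength] using hm⟩)
  | succ n hn ih =>
    rcases lt_or_ge m (c + windowLength P n₀ w n) with hold | hnew
    · exact (ih hcm hold).succ
    rw [windowLength_succ hn] at hm
    have hPn : P n := by
      by_contra hPn
      simp only [hPn, if_false] at hm
      omega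
    rw [if_pos hPn] at hm
    have hle := hgrowth n hn
    exact hasSumBelow_succ.2 (.inl ⟨hPn, by omega, ih (by omega) (by omega)⟩)

theorem exists_hasSumBelow_of_le_windowLength {c : ℕ}
    (hbase : ∀ m ∈ Ico c (c + w), HasSumBelow P n₀ m)
    (hgrowth : ∀ n ≥ n₀, n ≤ windowLength P n₀ w n) {m : ℕ} (hcm : c ≤ m) :
    ∃ n, HasSumBelow P n m := by
  have hlong := hgrowth (n₀ + m + 1) (by omega)
  exact ⟨n₀ + m + 1, hasSumBelow_of_lt_windowLength hbase hgrowth (by omega) hcm (by omega)⟩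

theorem le_windowLength_of_le_two_mul {p n : ℕ} (hp : P p) (hn₀p : n₀ ≤ p)
    (hupto : ∀ n ≤ p, n ≤ windowLength P n₀ w n) (hn : n ≤ 2 * p) :
    n ≤ windowLength P n₀ w n := by
  rcases le_or_gt n p with hnp | hpn
  · exact hupto n hnp
  have hsucc : windowLength P n₀ w (p + 1) ≤ windowLength P n₀ w n := windowLength_mono hpn
  rw [windowLength_succ hn₀p, if_pos hp] at hsucc
  have := hupto p le_rfl
  omega

theorem le_windowLength_of_isChain {p : ℕ} {l : List ℕ}
    (hchain : (p :: l).IsChain fun p q ↦ q ≤ 2 * p) (hl : ∀ q ∈ p :: l, n₀ ≤ q ∧ P q)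
    (hupto : ∀ n ≤ p, n ≤ windowLength P n₀ w n) {q n : ℕ} (hq : q ∈ p :: l)
    (hn : n ≤ 2 * q) : n ≤ windowLength P n₀ w n := by
  have hdouble {n : ℕ} : n ≤ 2 * p → n ≤ windowLength P n₀ w n :=
    le_windowLength_of_le_two_mul (hl p List.mem_cons_self).2 (hl p List.mem_cons_self).1 hupto
  induction l generalizing p with
  | nil => exact hdouble (List.mem_singleton.1 hq ▸ hn)
  | cons p' l ih =>
    rcases List.mem_cons.1 hq with rfl | hq
    · exact hdouble hn
    rw [List.isChain_cons_cons] at hchain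
    have hupto' (n : ℕ) (hnp' : n ≤ p') : n ≤ windowLength P n₀ w n :=
      hdouble (hnp'.trans hchain.1)
    have hl' (q : ℕ) (hq : q ∈ p' :: l) := hl q (List.mem_cons_of_mem p hq)
    exact ih hchain.2 hl' hupto' hq <| le_windowLength_of_le_two_mul
      (hl' p' List.mem_cons_self).2 (hl' p' List.mem_cons_self).1 hupto'

end SubsetSums

/-! ### Primality certificates -/

/-- `g ^ e % p` for `e < 2 ^ k`, by `k` modular squarings. -/
def powMod (g p : ℕ) : ℕ → ℕ → ℕ
  | 0, _ => 1 % p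
  | k + 1, e => powMod g p k (e / 2) ^ 2 * g ^ (e % 2) % p

theorem powMod_eq (g p : ℕ) {k e : ℕ} (he : e < 2 ^ k) : powMod g p k e = g ^ e % p := by
  induction k generalizing e with
  | zero =>
    obtain rfl : e = 0 := by omega
    rw [powMod, pow_zero]
  | succ k ih =>
    rw [powMod, ih (by omega), Nat.mul_mod, ← Nat.pow_mod, ← Nat.mul_mod, ← pow_mul, ← pow_add,
      Nat.div_add_mod']

/-- Lucas' primality certificate for `p`: the base `g` has order `p - 1` modulo `p`, where `p - 1`
has no prime factor outside `S`. The number `k` bounds the binary length of `p`, and hence the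
exponents in the factorization of `p - 1`. -/
def LucasCertificate (S : Finset ℕ) (k g p : ℕ) : Prop :=
  1 < p ∧ p ≤ 2 ^ k ∧ p - 1 ∣ (∏ q ∈ S, q) ^ k ∧ powMod g p k (p - 1) = 1 ∧
    ∀ q ∈ S, q ∣ p - 1 → powMod g p k ((p - 1) / q) ≠ 1

instance (S : Finset ℕ) (k g : ℕ) : DecidablePred (LucasCertificate S k g) :=
  fun _ ↦ inferInstanceAs (Decidable (_ ∧ _))

theorem LucasCertificate.prime {S : Finset ℕ} {k g p : ℕ} (hS : ∀ q ∈ S, q.Prime)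
    (h : LucasCertificate S k g p) : p.Prime := by
  obtain ⟨hp, hpk, hsmooth, hone, hne⟩ := h
  have hcast {e : ℕ} (he : e < 2 ^ k) : (g : ZMod p) ^ e = 1 ↔ powMod g p k e = 1 := by
    rw [powMod_eq g p he, ← Nat.cast_pow, ← Nat.cast_one, ZMod.natCast_eq_natCast_iff',
      Nat.mod_eq_of_lt hp]
  refine lucas_primality p g ((hcast (by omega)).2 hone) fun q hq hqp ↦ ?_
  obtain ⟨r, hr, hqr⟩ :=
    (hq.prime.dvd_finsetProd_iff _).1 (hq.prime.dvd_of_dvd_pow (hqp.trans hsmooth))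
  obtain rfl := (Nat.prime_dvd_prime_iff_eq hq (hS r hr)).1 hqr
  exact (hcast ((Nat.div_le_self _ _).trans_lt (by omega))).not.2 (hne q hr hqp)

/-! ### Mertens sums -/

theorem abs_sum_Ioc_mul_le_of_antitoneOn {c f : ℕ → ℝ} {a : ℕ} {C : ℝ}
    (hc : ∀ k, |∑ n ∈ Ioc a k, c n| ≤ C) (hf : AntitoneOn f (Set.Ioi a))
    (hf₀ : ∀ n, a < n → 0 ≤ f n) (b : ℕ) :
    |∑ n ∈ Ioc a b, c n * f n| ≤ C * f (a + 1) := by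
  have hC : 0 ≤ C := (abs_nonneg _).trans (hc a)
  rcases lt_or_ge b a with hba | hab
  · simpa [Ioc_eq_empty_of_le hba.le] using mul_nonneg hC (hf₀ (a + 1) a.lt_add_one)
  have by_parts : |∑ n ∈ Ioc a b, c n * f n - (∑ n ∈ Ioc a b, c n) * f (b + 1)| ≤
      C * (f (a + 1) - f (b + 1)) := by
    induction b, hab using Nat.le_induction with
    | base => simp
    | succ b hab ih =>
      have hstep : 0 ≤ f (b + 1) - f (b + 2) :=
        sub_nonneg.2 (hf (by simp; omega) (by simp; omega) (by omega))
      have hnext : |(∑ n ∈ Ioc a (b + 1), c n) * (f (b + 1) - f (b + 2))| ≤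
          C * (f (b + 1) - f (b + 2)) := by
        rw [abs_mul, abs_of_nonneg hstep]
        exact mul_le_mul_of_nonneg_right (hc (b + 1)) hstep
      calc _ = |(∑ n ∈ Ioc a b, c n * f n - (∑ n ∈ Ioc a b, c n) * f (b + 1)) +
              (∑ n ∈ Ioc a (b + 1), c n) * (f (b + 1) - f (b + 2))| := by
            congr 1
            rw [sum_Ioc_succ_top hab, sum_Ioc_succ_top hab]
            ring
        _ ≤ _ := (abs_add_le _ _).trans (add_le_add ih hnext)
        _ = _ := by ring
  have boundary : |(∑ n ∈ Ioc a b, c n) * f (b + 1)| ≤ C * f (b + 1) := by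
    have := hf₀ (b + 1) (by omega)
    rw [abs_mul, abs_of_nonneg this]
    exact mul_le_mul_of_nonneg_right (hc b) this
  calc _ = |(∑ n ∈ Ioc a b, c n * f n - (∑ n ∈ Ioc a b, c n) * f (b + 1)) +
          (∑ n ∈ Ioc a b, c n) * f (b + 1)| := by rw [sub_add_cancel]
    _ ≤ _ := (abs_add_le _ _).trans (add_le_add by_parts boundary)
    _ = _ := by ring

theorem sum_Ioc_mul_log_eq_sum_vonMangoldt {g : ℕ → ℝ} (hg : ∀ m n, g (m * n) = g m * g n)
    (N : ℕ) :
    ∑ n ∈ Ioc 0 N, g n * log n = ∑ n ∈ Ioc 0 N, g n * Λ n * ∑ m ∈ Ioc 0 (N / n), g m := by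
  let twistedLambda : ArithmeticFunction ℝ := ⟨fun n ↦ g n * Λ n, by simp⟩
  let g₀ : ArithmeticFunction ℝ := ⟨fun n ↦ if n = 0 then 0 else g n, by simp⟩
  have convolution (n : ℕ) : (twistedLambda * g₀) n = g n * log n := by
    rw [ArithmeticFunction.mul_apply, ← ArithmeticFunction.vonMangoldt_sum, mul_sum,
      Nat.sum_divisorsAntidiagonal fun d e ↦ twistedLambda d * g₀ e]
    refine sum_congr rfl fun d hd ↦ ?_
    have hquot : n / d ≠ 0 := (Nat.div_pos (Nat.divisor_le hd) (Nat.pos_of_mem_divisors hd)).ne'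
    simp only [twistedLambda, g₀, ArithmeticFunction.coe_mk, hquot, if_false]
    rw [mul_right_comm, ← hg, Nat.mul_div_cancel' (Nat.dvd_of_mem_divisors hd)]
  simp_rw [← convolution, ArithmeticFunction.sum_Ioc_mul_eq_sum_sum]
  refine sum_congr rfl fun n _ ↦ congrArg _ (sum_congr rfl fun m hm ↦ ?_)
  simp [g₀, (mem_Ioc.1 hm).1.ne']

theorem div_lt_natDiv_add_one (N n : ℕ) : (N : ℝ) / n < (N / n : ℕ) + 1 := by
  rw [← Nat.floor_div_eq_div (K := ℝ)]
  exact Nat.lt_floor_add_one _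

theorem sum_Ioc_zero_vonMangoldt_eq_psi (N : ℕ) : ∑ n ∈ Ioc 0 N, Λ n = ψ N := by
  simp [psi]

/-- The sum `∑ Λ(n) / n` over `n ≤ N` of Mertens' first theorem. -/
noncomputable def mertensSum (N : ℕ) : ℝ := ∑ n ∈ Ioc 0 N, Λ n / n

theorem log_factorial_eq_sum_vonMangoldt (N : ℕ) :
    log N.factorial = ∑ n ∈ Ioc 0 N, Λ n * (N / n : ℕ) := by
  have sum_log : log N.factorial = ∑ n ∈ Ioc 0 N, log n := by
    induction N with
    | zero => simp
    | succ N ih =>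
      rw [sum_Ioc_succ_top N.zero_le, ← ih, Nat.factorial_succ, Nat.cast_mul,
        log_mul (by positivity) (by positivity), add_comm]
  simpa [sum_log] using sum_Ioc_mul_log_eq_sum_vonMangoldt (g := fun _ ↦ 1) (by simp) N

theorem log_sub_one_le_mertensSum {N : ℕ} (hN : 1 ≤ N) : log N - 1 ≤ mertensSum N := by
  have hN₀ : (0 : ℝ) < N := by exact_mod_cast hN
  have stirling : N * (log N - 1) ≤ log N.factorial := by
    have h := Stirling.le_log_factorial_stirling (n := N) (by omega)
    have hlog : 0 ≤ log (2 * π) := log_nonneg (by linarith [pi_gt_three])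
    linarith [log_natCast_nonneg N]
  have hfactorial : log N.factorial ≤ N * mertensSum N := by
    rw [log_factorial_eq_sum_vonMangoldt, mertensSum, mul_sum]
    refine sum_le_sum fun n _ ↦ ?_
    calc Λ n * (N / n : ℕ) ≤ Λ n * (N / n) :=
          mul_le_mul_of_nonneg_left Nat.cast_div_le ArithmeticFunction.vonMangoldt_nonneg
      _ = N * (Λ n / n) := by ring
  exact le_of_mul_le_mul_left (stirling.trans hfactorial) hN₀

theorem mertensSum_le {N : ℕ} (hN : 1 ≤ N) : mertensSum N ≤ log N + ψ N / N := by
  have hN₀ : (0 : ℝ) < N := by exact_mod_cast hN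
  have hfactorial : log N.factorial ≤ N * log N := by
    rw [← log_pow]
    exact log_le_log (by positivity) (by exact_mod_cast Nat.factorial_le_pow N)
  refine le_of_mul_le_mul_left ?_ hN₀
  calc N * mertensSum N ≤ ∑ n ∈ Ioc 0 N, (Λ n * (N / n : ℕ) + Λ n) := by
        rw [mertensSum, mul_sum]
        refine sum_le_sum fun n _ ↦ ?_
        calc N * (Λ n / n) = Λ n * (N / n) := by ring
          _ ≤ Λ n * ((N / n : ℕ) + 1) := mul_le_mul_of_nonneg_left
            (div_lt_natDiv_add_one N n).le ArithmeticFunction.vonMangoldt_nonneg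
          _ = _ := by ring
    _ = log N.factorial + ψ N := by
        rw [sum_add_distrib, log_factorial_eq_sum_vonMangoldt, sum_Ioc_zero_vonMangoldt_eq_psi]
    _ ≤ N * log N + ψ N := by gcongr
    _ = N * (log N + ψ N / N) := by field_simp

/-- The nontrivial character modulo `4`, as a real-valued function on `ℕ`. -/
noncomputable def chi (n : ℕ) : ℝ := ZMod.χ₄ n

theorem chi_mul (m n : ℕ) : chi (m * n) = chi m * chi n := by
  rw [chi, chi, chi, Nat.cast_mul, map_mul, Int.cast_mul]

theorem chi_eq_ite (n : ℕ) :
    chi n = if n % 2 = 0 then 0 else if n % 4 = 1 then 1 else -1 := by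
  rw [chi, ZMod.χ₄_nat_eq_if_mod_four]
  split_ifs <;> norm_num

theorem abs_chi_le_one (n : ℕ) : |chi n| ≤ 1 := by
  rw [chi_eq_ite]
  split_ifs <;> norm_num

theorem sum_Ioc_zero_chi (N : ℕ) :
    ∑ n ∈ Ioc 0 N, chi n = if N % 4 = 1 ∨ N % 4 = 2 then 1 else 0 := by
  induction N with
  | zero => simp
  | succ N ih =>
    rw [sum_Ioc_succ_top N.zero_le, ih, chi_eq_ite]
    split_ifs <;> first | omega | norm_num

theorem abs_sum_Ioc_chi_le_one (a b : ℕ) : |∑ n ∈ Ioc a b, chi n| ≤ 1 := by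
  rcases le_total b a with hba | hab
  · simp [Ioc_eq_empty_of_le hba]
  rw [eq_sub_of_add_eq' (sum_Ioc_consecutive chi a.zero_le hab), sum_Ioc_zero_chi,
    sum_Ioc_zero_chi]
  split_ifs <;> norm_num

/-- The partial sums of Leibniz' series `∑ χ(n) / n = π / 4`. -/
noncomputable def leibnizSum (N : ℕ) : ℝ := ∑ n ∈ Ioc 0 N, chi n / n

theorem abs_leibnizSum_sub_le {k N : ℕ} (hkN : k ≤ N) :
    |leibnizSum N - leibnizSum k| ≤ 1 / (k + 1) := by
  have hanti : AntitoneOn (fun n : ℕ ↦ (n : ℝ)⁻¹) (Set.Ioi k) := fun m hm n _ hmn ↦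
    inv_anti₀ (by exact_mod_cast (Nat.zero_le k).trans_lt hm) (by exact_mod_cast hmn)
  have h := abs_sum_Ioc_mul_le_of_antitoneOn (abs_sum_Ioc_chi_le_one k) hanti
    (fun _ _ ↦ by positivity) N
  rw [leibnizSum, leibnizSum, ← sum_Ioc_consecutive _ k.zero_le hkN, add_sub_cancel_left]
  simpa [div_eq_mul_inv] using h

theorem two_thirds_le_leibnizSum {N : ℕ} (hN : 2 ≤ N) : 2 / 3 ≤ leibnizSum N := by
  have htwo : leibnizSum 2 = 1 := by
    norm_num [leibnizSum, sum_Ioc_succ_top, chi_eq_ite]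
  have h := (abs_le.1 (abs_leibnizSum_sub_le hN)).1
  norm_num [htwo] at h
  linarith

theorem abs_sum_Ioc_chi_div_mul_log_le {z : ℕ} (hz : 2 ≤ z) (y : ℕ) :
    |∑ n ∈ Ioc z y, chi n / n * log n| ≤ log (z + 1) / (z + 1) := by
  have hexp {n : ℕ} (hn : z < n) : exp 1 ≤ n := by
    have : (3 : ℝ) ≤ n := by exact_mod_cast hz.trans_lt hn
    linarith [exp_one_lt_d9]
  have hanti : AntitoneOn (fun n : ℕ ↦ log n / n) (Set.Ioi z) := fun m hm n hn hmn ↦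
    log_div_self_antitoneOn (hexp hm) (hexp hn) (by exact_mod_cast hmn)
  have h := abs_sum_Ioc_mul_le_of_antitoneOn (abs_sum_Ioc_chi_le_one z) hanti
    (fun n _ ↦ div_nonneg (log_natCast_nonneg n) n.cast_nonneg) y
  simpa [div_mul_eq_mul_div, mul_div_assoc] using h

/-- The sum `∑ χ(n) Λ(n) / n` over `n ≤ N`. -/
noncomputable def twistedMertensSum (N : ℕ) : ℝ := ∑ n ∈ Ioc 0 N, chi n / n * Λ n

/-- The error in replacing every `leibnizSum (N / n)` by `leibnizSum y` in the expansion of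
`∑ χ(n) log(n) / n` over `n ≤ N`. -/
noncomputable def leibnizError (y N : ℕ) : ℝ :=
  ∑ n ∈ Ioc 0 N, chi n / n * Λ n * (leibnizSum y - leibnizSum (N / n))

theorem leibnizSum_mul_twistedMertensSum (y N : ℕ) :
    leibnizSum y * twistedMertensSum N =
      ∑ n ∈ Ioc 0 N, chi n / n * log n + leibnizError y N := by
  have hmul (m n : ℕ) : chi (m * n) / (m * n : ℕ) = chi m / m * (chi n / n) := by
    rw [chi_mul, Nat.cast_mul, mul_div_mul_comm]
  rw [sum_Ioc_mul_log_eq_sum_vonMangoldt hmul, leibnizError, ← sum_add_distrib,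
    twistedMertensSum, mul_sum]
  refine sum_congr rfl fun n _ ↦ ?_
  rw [← leibnizSum]
  ring

theorem abs_leibnizError_le {y N : ℕ} (hNy : N ≤ y) : |leibnizError y N| ≤ ψ N / N := by
  have hterm {n : ℕ} (hn : n ∈ Ioc 0 N) :
      |chi n / n * Λ n * (leibnizSum y - leibnizSum (N / n))| ≤ Λ n / N := by
    obtain ⟨hn₀, hnN⟩ := mem_Ioc.1 hn
    have : (0 : ℝ) < n := by exact_mod_cast hn₀
    have hN₀ : (0 : ℝ) < N := by exact_mod_cast hn₀.trans_le hnN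
    have hΛ : 0 ≤ Λ n := ArithmeticFunction.vonMangoldt_nonneg
    have hleibniz : |leibnizSum y - leibnizSum (N / n)| ≤ n / N :=
      calc _ ≤ 1 / (((N / n : ℕ) : ℝ) + 1) :=
            abs_leibnizSum_sub_le ((Nat.div_le_self N n).trans hNy)
        _ ≤ 1 / ((N : ℝ) / n) :=
            one_div_le_one_div_of_le (by positivity) (div_lt_natDiv_add_one N n).le
        _ = n / N := one_div_div ..
    calc _ = |chi n| * (Λ n / n) * |leibnizSum y - leibnizSum (N / n)| := by
          rw [abs_mul, abs_mul, abs_div, Nat.abs_cast, abs_of_nonneg hΛ]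
          ring
      _ ≤ 1 * (Λ n / n) * (n / N) := by
          gcongr
          exact abs_chi_le_one n
      _ = Λ n / N := by field_simp
  calc _ ≤ ∑ n ∈ Ioc 0 N, Λ n / N :=
        (abs_sum_le_sum_abs _ _).trans (sum_le_sum fun _ hn ↦ hterm hn)
    _ = ψ N / N := by rw [← sum_div, sum_Ioc_zero_vonMangoldt_eq_psi]

theorem abs_twistedMertensSum_sub_le {z y : ℕ} (hz : 2 ≤ z) (hzy : z ≤ y) :
    |twistedMertensSum y - twistedMertensSum z| ≤
      3 / 2 * (log (z + 1) / (z + 1) + ψ y / y + ψ z / z) := by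
  have hexpand : leibnizSum y * (twistedMertensSum y - twistedMertensSum z) =
      ∑ n ∈ Ioc z y, chi n / n * log n + leibnizError y y - leibnizError y z := by
    rw [mul_sub, leibnizSum_mul_twistedMertensSum, leibnizSum_mul_twistedMertensSum,
      ← sum_Ioc_consecutive _ z.zero_le hzy]
    ring
  have hleibniz := two_thirds_le_leibnizSum (hz.trans hzy)
  have hupper : leibnizSum y * |twistedMertensSum y - twistedMertensSum z| ≤
      log (z + 1) / (z + 1) + ψ y / y + ψ z / z := by
    calc _ = |∑ n ∈ Ioc z y, chi n / n * log n + leibnizError y y - leibnizError y z| := by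
          rw [← hexpand, abs_mul, abs_of_nonneg (a := leibnizSum y) (by linarith)]
      _ ≤ |∑ n ∈ Ioc z y, chi n / n * log n| + |leibnizError y y| + |leibnizError y z| :=
          (abs_sub _ _).trans (add_le_add_left (abs_add_le _ _) _)
      _ ≤ _ := add_le_add (add_le_add (abs_sum_Ioc_chi_div_mul_log_le hz y)
          (abs_leibnizError_le le_rfl)) (abs_leibnizError_le hzy)
  have hlower := mul_le_mul_of_nonneg_right hleibniz
    (abs_nonneg (twistedMertensSum y - twistedMertensSum z))
  linarith

/-! ### Primes in a class modulo four -/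

theorem one_add_chi_mul_chi_div_two {a n : ℕ} (ha : a = 1 ∨ a = 3) (hn : n % 2 = 1) :
    (1 + chi a * chi n) / 2 = if n % 4 = a then 1 else 0 := by
  have hn4 : n % 4 = 1 ∨ n % 4 = 3 := by omega
  rcases ha with rfl | rfl <;> rcases hn4 with h | h <;> simp [chi_eq_ite, hn, h]

theorem sum_not_prime_vonMangoldt_div_le {z y : ℕ} (hz : 1 ≤ z) :
    ∑ n ∈ Ioc z y with ¬n.Prime, Λ n / n ≤ (ψ y - θ y) / z := by
  have hz₀ : (0 : ℝ) < z := by exact_mod_cast hz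
  calc ∑ n ∈ Ioc z y with ¬n.Prime, Λ n / n ≤ ∑ n ∈ Ioc z y with ¬n.Prime, Λ n / z := by
        refine sum_le_sum fun n hn ↦ ?_
        have hzn : z ≤ n := (mem_Ioc.1 (mem_filter.1 hn).1).1.le
        exact div_le_div_of_nonneg_left ArithmeticFunction.vonMangoldt_nonneg hz₀
          (by exact_mod_cast hzn)
    _ ≤ ∑ n ∈ Ioc 0 y with ¬n.Prime, Λ n / z :=
        sum_le_sum_of_subset_of_nonneg
          (filter_subset_filter _ (Ioc_subset_Ioc_left z.zero_le))
          fun n _ _ ↦ div_nonneg ArithmeticFunction.vonMangoldt_nonneg hz₀.le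
    _ = (ψ y - θ y) / z := by
        rw [← sum_div, psi_sub_theta_eq_sum_not_prime, Nat.floor_natCast]

theorem half_one_add_chi_mul_vonMangoldt_div_le {a n : ℕ} (ha : a = 1 ∨ a = 3) (hn : 2 < n) :
    (1 + chi a * chi n) / 2 * (Λ n / n) ≤
      (if n.Prime ∧ n % 4 = a then log n / n else 0) + if ¬n.Prime then Λ n / n else 0 := by
  by_cases hp : n.Prime
  · have hodd : n % 2 = 1 := hp.eq_two_or_odd.resolve_left hn.ne'
    rw [one_add_chi_mul_chi_div_two ha hodd, ArithmeticFunction.vonMangoldt_apply_prime hp]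
    simp [hp]
  · have hle : (1 + chi a * chi n) / 2 ≤ 1 := by
      rw [← chi_mul]
      linarith [(abs_le.1 (abs_chi_le_one (a * n))).2]
    simpa [hp] using mul_le_of_le_one_left
      (div_nonneg ArithmeticFunction.vonMangoldt_nonneg n.cast_nonneg) hle

theorem half_mertensSum_sub_le {a z y : ℕ} (ha : a = 1 ∨ a = 3) (hz : 2 ≤ z) (hzy : z ≤ y) :
    ((mertensSum y - mertensSum z) - |twistedMertensSum y - twistedMertensSum z|) / 2 ≤
      ∑ p ∈ Ioc z y with p.Prime ∧ p % 4 = a, log p / p + (ψ y - θ y) / z := by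
  have htwist : -|twistedMertensSum y - twistedMertensSum z| ≤
      chi a * (twistedMertensSum y - twistedMertensSum z) := by
    refine neg_le_of_abs_le ?_
    rw [abs_mul]
    exact mul_le_of_le_one_left (abs_nonneg _) (abs_chi_le_one a)
  calc _ ≤ ((mertensSum y - mertensSum z) +
          chi a * (twistedMertensSum y - twistedMertensSum z)) / 2 := by linarith
    _ = ∑ n ∈ Ioc z y, (1 + chi a * chi n) / 2 * (Λ n / n) := by
        simp only [mertensSum, twistedMertensSum,
          ← sum_Ioc_consecutive _ z.zero_le hzy, add_sub_cancel_left]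
        rw [mul_sum, ← sum_add_distrib, sum_div]
        exact sum_congr rfl fun n _ ↦ by ring
    _ ≤ ∑ p ∈ Ioc z y with p.Prime ∧ p % 4 = a, log p / p +
          ∑ n ∈ Ioc z y with ¬n.Prime, Λ n / n := by
        rw [sum_filter, sum_filter, ← sum_add_distrib]
        exact sum_le_sum fun n hn ↦
          half_one_add_chi_mul_vonMangoldt_div_le ha (hz.trans_lt (mem_Ioc.1 hn).1)
    _ ≤ _ := by
        gcongr
        exact sum_not_prime_vonMangoldt_div_le (by omega)

theorem psi_le_three_halves_mul {x : ℝ} (hx : 2 ^ 16 ≤ x) : ψ x ≤ 3 / 2 * x := by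
  have hlog : log x ≤ log 2 / 16 * √x := by
    have hexp : exp 2 ≤ 2 ^ 16 := by
      rw [← one_add_one_eq_two, exp_add]
      nlinarith [exp_one_lt_d9, exp_one_gt_d9]
    have hsqrt : √(2 ^ 16 : ℝ) = 2 ^ 8 := by
      rw [show (2 : ℝ) ^ 16 = (2 ^ 8) ^ 2 by norm_num, sqrt_sq (by norm_num)]
    have h := log_div_sqrt_antitoneOn hexp (hexp.trans hx) hx
    simp only [log_pow, hsqrt] at h
    rw [div_le_iff₀ (sqrt_pos.2 (by linarith))] at h
    exact h.trans_eq (by push_cast; ring)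
  have hlog4 : log 4 = 2 * log 2 := by
    rw [show (4 : ℝ) = 2 ^ 2 by norm_num, log_pow, Nat.cast_ofNat]
  calc ψ x ≤ log 4 * x + 2 * √x * log x := psi_le (by linarith)
    _ ≤ log 4 * x + 2 * √x * (log 2 / 16 * √x) := by gcongr
    _ = 17 / 8 * log 2 * x := by
        rw [hlog4]
        linear_combination (log 2 / 8) * mul_self_sqrt (show 0 ≤ x by linarith)
    _ ≤ 3 / 2 * x := by
        gcongr
        linarith [log_two_lt_d9]

theorem psi_sub_theta_le_three_mul_psi_sqrt {x : ℝ} (hx : 1 ≤ x) : ψ x - θ x ≤ 3 * ψ √x := by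
  have hroot {r : ℝ} (hr : r ≤ 2⁻¹) : ψ (x ^ r) ≤ ψ √x := by
    rw [sqrt_eq_rpow, one_div]
    exact psi_mono (rpow_le_rpow_of_exponent_le hx hr)
  have h := psi_sub_theta_le_psi_add_psi_add_psi x
  linarith [hroot (r := 2⁻¹) le_rfl, hroot (r := 3⁻¹) (by norm_num),
    hroot (r := 5⁻¹) (by norm_num)]

theorem psi_natCast_div_le {N : ℕ} (hN : 2 ^ 16 ≤ N) : ψ N / N ≤ 3 / 2 := by
  have hN' : (2 : ℝ) ^ 16 ≤ N := by exact_mod_cast hN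
  rw [div_le_iff₀ (by linarith)]
  exact psi_le_three_halves_mul hN'

theorem psi_sub_theta_sq_le {x : ℝ} (hx : 2 ^ 16 ≤ x) : ψ (x ^ 2) - θ (x ^ 2) ≤ 9 / 2 * x := by
  have h := psi_sub_theta_le_three_mul_psi_sqrt (x := x ^ 2) (by nlinarith)
  rw [sqrt_sq (by linarith)] at h
  linarith [psi_le_three_halves_mul hx]

theorem log_div_self_le_one_div_thousand {x : ℝ} (hx : 2 ^ 16 ≤ x) : log x / x ≤ 1 / 1000 := by
  have hexp : exp 1 ≤ 2 ^ 16 := by linarith [exp_one_lt_d9]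
  have h := log_div_self_antitoneOn hexp (hexp.trans hx) hx
  simp only [log_pow] at h
  norm_num at h
  linarith [log_two_lt_d9]

theorem log_div_thirty_le_sum_log_div {a s : ℕ} (ha : a = 1 ∨ a = 3) (hs : 2 ^ 16 ≤ s) :
    log s / 30 ≤ ∑ p ∈ Ioc (8 * s) (s ^ 2) with p.Prime ∧ p % 4 = a, log p / p := by
  have hs' : (2 : ℝ) ^ 16 ≤ s := by exact_mod_cast hs
  have hs₀ : (0 : ℝ) < s := by linarith
  have hz : 2 ≤ 8 * s := by omega
  have hzy : 8 * s ≤ s ^ 2 := by nlinarith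
  have hpsi_y := psi_natCast_div_le (N := s ^ 2) (by nlinarith)
  have hpsi_z := psi_natCast_div_le (N := 8 * s) (by omega)
  have hpowers : (ψ (s ^ 2 : ℕ) - θ (s ^ 2 : ℕ)) / (8 * s : ℕ) ≤ 9 / 16 := by
    push_cast
    rw [div_le_iff₀ (by positivity)]
    linarith [psi_sub_theta_sq_le hs']
  have hlog_div : log ((8 * s : ℕ) + 1) / ((8 * s : ℕ) + 1) ≤ 1 / 1000 :=
    log_div_self_le_one_div_thousand (by push_cast; linarith)
  have hmertens_y := log_sub_one_le_mertensSum (N := s ^ 2) (by omega)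
  have hmertens_z := mertensSum_le (N := 8 * s) (by omega)
  have htwisted := abs_twistedMertensSum_sub_le hz hzy
  have hclass := half_mertensSum_sub_le ha hz hzy
  have hlog_y : log (s ^ 2 : ℕ) = 2 * log s := by simp
  have hlog_z : log (8 * s : ℕ) = 3 * log 2 + log s := by
    rw [Nat.cast_mul, log_mul (by norm_num) hs₀.ne', Nat.cast_ofNat,
      show (8 : ℝ) = 2 ^ 3 by norm_num, log_pow, Nat.cast_ofNat]
  have hlog_s : 16 * log 2 ≤ log s := by simpa using log_le_log (by norm_num) hs'
  linarith [log_two_gt_d9, log_two_lt_d9]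

theorem sq_succ_le_sum_primes {a s : ℕ} (ha : a = 1 ∨ a = 3) (hs : 2 ^ 16 ≤ s) :
    (s + 1) ^ 2 ≤ ∑ p ∈ Ioc (8 * s) (s ^ 2) with p.Prime ∧ p % 4 = a, p := by
  have hs' : (2 : ℝ) ^ 16 ≤ s := by exact_mod_cast hs
  have : (0 : ℝ) < s := by linarith
  have hlog : 0 < log s := log_pos (by linarith)
  have hterm {p : ℕ} (hp : p ∈ Ioc (8 * s) (s ^ 2)) :
      log p / p ≤ p * (log s / (32 * s ^ 2)) := by
    obtain ⟨hlow, hhigh⟩ := mem_Ioc.1 hp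
    have hlow' : 8 * (s : ℝ) ≤ p := by exact_mod_cast hlow.le
    have hp₀ : (0 : ℝ) < p := by linarith
    have hlog_p : log p ≤ 2 * log s := by
      simpa using log_le_log hp₀ (show (p : ℝ) ≤ s ^ 2 by exact_mod_cast hhigh)
    rw [mul_div_assoc', div_le_div_iff₀ hp₀ (by positivity)]
    calc log p * (32 * s ^ 2) ≤ 2 * log s * (32 * s ^ 2) := by gcongr
      _ = log s * (8 * s) ^ 2 := by ring
      _ ≤ log s * p ^ 2 := by gcongr
      _ = p * log s * p := by ring
  set S := ∑ p ∈ Ioc (8 * s) (s ^ 2) with p.Prime ∧ p % 4 = a, p with hS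
  have hsum : log s / 30 ≤ S * (log s / (32 * s ^ 2)) := by
    refine (log_div_thirty_le_sum_log_div ha hs).trans ?_
    rw [hS, Nat.cast_sum, sum_mul]
    exact sum_le_sum fun p hp ↦ hterm (mem_filter.1 hp).1
  have hS_lower : 16 / 15 * (s : ℝ) ^ 2 ≤ S := by
    rw [mul_div_assoc', div_le_div_iff₀ (by norm_num) (by positivity)] at hsum
    nlinarith
  have : ((s : ℝ) + 1) ^ 2 ≤ S := by nlinarith
  exact_mod_cast this

theorem le_windowLength_of_two_pow_lt {a n₀ n : ℕ} (ha : a = 1 ∨ a = 3) (hn₀ : n₀ ≤ 2 ^ 16)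
    (w : ℕ) (hn : 2 ^ 32 < n) :
    n ≤ windowLength (fun p ↦ p.Prime ∧ p % 4 = a) n₀ w n := by
  set s := (n - 1).sqrt
  have hs_ge : 2 ^ 16 ≤ s := Nat.le_sqrt.2 (by omega)
  have hs_le : s ^ 2 ≤ n - 1 := Nat.sqrt_le' _
  have hlt : n - 1 < (s + 1) ^ 2 := Nat.lt_succ_sqrt' _
  have hsubset : Ioc (8 * s) (s ^ 2) ⊆ Ico n₀ n := fun p hp ↦ by
    rw [mem_Ioc] at hp
    exact mem_Ico.2 ⟨by omega, by omega⟩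
  calc n ≤ (s + 1) ^ 2 := by omega
    _ ≤ ∑ p ∈ Ioc (8 * s) (s ^ 2) with p.Prime ∧ p % 4 = a, p := sq_succ_le_sum_primes ha hs_ge
    _ ≤ ∑ p ∈ Ico n₀ n with p.Prime ∧ p % 4 = a, p :=
        sum_le_sum_of_subset (filter_subset_filter _ hsubset)
    _ ≤ _ := Nat.le_add_left _ _

theorem exists_sum_primes_eq_of_isChain {a c n₀ w p : ℕ} {l : List ℕ} (ha : a = 1 ∨ a = 3)
    (hc : c ≠ 0) (hn₀ : n₀ ≤ 2 ^ 16) (hpw : p ≤ w)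
    (hbase : ∀ m ∈ Ico c (c + w), HasSumBelow (fun p ↦ p.Prime ∧ p % 4 = a) n₀ m)
    (hchain : (p :: l).IsChain fun p q ↦ q ≤ 2 * p)
    (hl : ∀ q ∈ p :: l, n₀ ≤ q ∧ LucasCertificate {2, 3, 5, 7, 11, 13} 32 3 q ∧ q % 4 = a)
    (hlast : ∃ q ∈ p :: l, 2 ^ 32 ≤ 2 * q) {m : ℕ} (hm : c ≤ m) :
    ∃ T : Finset ℕ, T.Nonempty ∧ (∀ p ∈ T, p.Prime ∧ p % 4 = a) ∧ ∑ p ∈ T, p = m := by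
  obtain ⟨q, hq, hlast⟩ := hlast
  have hl' (q : ℕ) (hq : q ∈ p :: l) : n₀ ≤ q ∧ q.Prime ∧ q % 4 = a :=
    (hl q hq).imp_right (And.imp_left (LucasCertificate.prime (by norm_num)))
  have hgrowth (n : ℕ) (_ : n₀ ≤ n) :
      n ≤ windowLength (fun p ↦ p.Prime ∧ p % 4 = a) n₀ w n := by
    rcases le_or_gt n (2 ^ 32) with hsmall | hlarge
    · exact le_windowLength_of_isChain hchain hl'
        (fun n hn ↦ (hn.trans hpw).trans (Nat.le_add_right _ _)) hq (hsmall.trans hlast)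
    · exact le_windowLength_of_two_pow_lt ha hn₀ w hlarge
  obtain ⟨n, T, hT, hsum⟩ := exists_hasSumBelow_of_le_windowLength hbase hgrowth hm
  refine ⟨T, nonempty_of_sum_ne_zero (f := id) ?_, fun p hp ↦ (hT p hp).2, hsum⟩
  simp only [id, hsum]
  omega

-- In both chains each prime is the largest one with a certificate in base `3` that is at most twice
-- its predecessor.
theorem exists_sum_primes_one_mod_four {m : ℕ} (hm : 122 ≤ m) :
    ∃ T : Finset ℕ, T.Nonempty ∧ (∀ p ∈ T, p.Prime ∧ p % 4 = 1) ∧ ∑ p ∈ T, p = m :=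
  exists_sum_primes_eq_of_isChain (n₀ := 110) (w := 113) (p := 113)
    (l := [197, 353, 701, 1373, 2549, 4481, 8009, 16001, 30977, 55001, 108161, 208001, 394241,
      728729, 1456001, 2818817, 5632001, 11200001, 22147841, 43120001, 85196801, 169569401,
      338338001, 665357057, 1317668801, 2507884289])
    (ha := .inl rfl) (hc := by decide) (hn₀ := by decide) (hpw := le_rfl)
    (hbase := by decide +kernel) (hchain := by decide +kernel) (hl := by decide +kernel)
    (hlast := by decide +kernel) (hm := hm)

theorem exists_sum_primes_three_mod_four {m : ℕ} (hm : 122 ≤ m) :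
    ∃ T : Finset ℕ, T.Nonempty ∧ (∀ p ∈ T, p.Prime ∧ p % 4 = 3) ∧ ∑ p ∈ T, p = m :=
  exists_sum_primes_eq_of_isChain (n₀ := 110) (w := 127) (p := 127)
    (l := [211, 379, 751, 1459, 2731, 5347, 10531, 19603, 38611, 72031, 107251, 204751, 404251,
      731251, 1397551, 2668051, 5314411, 10588411, 20122831, 40020751, 78440671, 146742751,
      291493567, 564671251, 1089453751, 2138906251, 4237867999])
    (ha := .inr rfl) (hc := by decide) (hn₀ := by decide) (hpw := le_rfl)
    (hbase := by decide +kernel) (hchain := by decide +kernel) (hl := by decide +kernel)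
    (hlast := by decide +kernel) (hm := hm)

/-- **Corollary 1.**
For every integer `m ≥ 122`, there are a nonempty finite set of distinct primes all
congruent to `1` modulo `4` and a nonempty finite set of distinct primes all congruent
to `3` modulo `4`, each summing to `m`. -/
theorem stmt8 (m : ℕ) (hm : 122 ≤ m) :
    ∃ T₁ T₂ : Finset ℕ, T₁.Nonempty ∧ T₂.Nonempty ∧
      (∀ p ∈ T₁, p.Prime ∧ p % 4 = 1) ∧ (∀ q ∈ T₂, q.Prime ∧ q % 4 = 3) ∧
      ∑ p ∈ T₁, p = m ∧ ∑ q ∈ T₂, q = m := by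
  obtain ⟨T₁, hne₁, hT₁, hsum₁⟩ := exists_sum_primes_one_mod_four hm
  obtain ⟨T₂, hne₂, hT₂, hsum₂⟩ := exists_sum_primes_three_mod_four hm
  exact ⟨T₁, T₂, hne₁, hne₂, hT₁, hT₂, hsum₁, hsum₂⟩
end

section
/- Every positive integer m that does not lie in the set [1,17] ∪ [19,21] ∪ [23,28] ∪ [31,33] ∪ [35,36] ∪ [38,40] ∪ [43,45] ∪ [48,49] ∪ [51,52] ∪ [55,57] ∪ {60, 62, 65, 68, 69, 77, 80, 81, 85, 93, 121} can be written both as a sum of distinct primes congruent to 1 modulo 4 and as a sum of distinct primes congruent to 3 modulo 4. -/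
open Finset

/-- The exceptional set of positive integers:
`[1,17] ∪ [19,21] ∪ [23,28] ∪ [31,33] ∪ [35,36] ∪ [38,40] ∪ [43,45] ∪ [48,49] ∪
[51,52] ∪ [55,57] ∪ {60, 62, 65, 68, 69, 77, 80, 81, 85, 93, 121}`. -/
def exceptionalSet : Finset ℕ :=
  Icc 1 17 ∪ Icc 19 21 ∪ Icc 23 28 ∪ Icc 31 33 ∪ Icc 35 36 ∪ Icc 38 40 ∪
    Icc 43 45 ∪ Icc 48 49 ∪ Icc 51 52 ∪ Icc 55 57 ∪
    ({60, 62, 65, 68, 69, 77, 80, 81, 85, 93, 121} : Finset ℕ)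

/-!
If all integers of `[L, N]` are sums of distinct elements of `P` up to `x`, and the elements of `P`
in `(x, n]` always sum to at least `n + L - N`, then adjoining the elements of `P` beyond `x` one
at a time never leaves a gap, so every `m ≥ L` is a sum of distinct elements of `P`. Here `P` is a
class of odd primes modulo `4`, `x = 113`, `L = 122` and `N = 697`, and the initial sums are a
finite computation.

Below `2 ^ 50` the growth condition follows from a chain of primes of the class, each at most twice
its predecessor. From `2 ^ 50` on it follows from an explicit Mertens estimate: comparing
`∑ χ₄(n) log n / n` with `L(1, χ₄) ∑ χ₄(n) Λ(n) / n`, where `L(1, χ₄) = π / 4`, bounds the twisted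
sums of `Λ(n) / n`, so each class receives about half of `∑ log p / p` over `(x, 2 ^ 14 x]`. This
forces far more primes of the class into that interval than are needed.
-/

namespace DistinctPrimeSums

open Chebyshev Filter Topology
open scoped ArithmeticFunction.vonMangoldt

/-! ### Sums of distinct elements -/

section DistinctSums

/-- `m` is a sum of distinct natural numbers satisfying `P`. The empty sum is allowed, so `0` always
qualifies. -/
def IsDistinctSum (P : ℕ → Prop) (m : ℕ) : Prop :=
  ∃ T : Finset ℕ, (∀ p ∈ T, P p) ∧ ∑ p ∈ T, p = m

/-- The sum of all `p ∈ (x, n]` satisfying `P`, which measures how far the sums of distinct elements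
reach once everything up to `n` may be used. -/
def sumIoc (P : ℕ → Prop) [DecidablePred P] (x n : ℕ) : ℕ :=
  ∑ p ∈ Ioc x n with P p, p

variable {P Q : ℕ → Prop} {x N L m n p q : ℕ}

theorem IsDistinctSum.mono (h : IsDistinctSum P m) (hPQ : ∀ p, P p → Q p) : IsDistinctSum Q m :=
  let ⟨T, hT, hsum⟩ := h
  ⟨T, fun p hp => hPQ p (hT p hp), hsum⟩

theorem IsDistinctSum.add (h : IsDistinctSum P m) (hPQ : ∀ p, P p → Q p) (hQ : Q p) (hP : ¬P p) :
    IsDistinctSum Q (m + p) := by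
  obtain ⟨T, hT, rfl⟩ := h
  have hpT : p ∉ T := fun hp => hP (hT p hp)
  refine ⟨insert p T, fun q hq => ?_, by rw [sum_insert hpT, add_comm]⟩
  rcases mem_insert.1 hq with rfl | hq
  exacts [hQ, hPQ q (hT q hq)]

theorem IsDistinctSum.exists_nonempty (h : IsDistinctSum P m) (hm : 0 < m) :
    ∃ T : Finset ℕ, T.Nonempty ∧ (∀ p ∈ T, P p) ∧ ∑ p ∈ T, p = m := by
  obtain ⟨T, hT, rfl⟩ := h
  exact ⟨T, nonempty_of_sum_ne_zero hm.ne', hT, rfl⟩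

variable [DecidablePred P]

theorem sumIoc_self : sumIoc P x x = 0 := by
  simp [sumIoc]

theorem sumIoc_succ (h : x ≤ n) :
    sumIoc P x (n + 1) = sumIoc P x n + if P (n + 1) then n + 1 else 0 := by
  rw [sumIoc, sumIoc, sum_filter, sum_Ioc_succ_top h, sum_filter]

theorem sumIoc_mono_right (h : m ≤ n) : sumIoc P x m ≤ sumIoc P x n :=
  sum_le_sum_of_subset (filter_subset_filter _ (Ioc_subset_Ioc_right h))

theorem sumIoc_anti_left {x' : ℕ} (h : x ≤ x') : sumIoc P x' n ≤ sumIoc P x n :=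
  sum_le_sum_of_subset (filter_subset_filter _ (Ioc_subset_Ioc_left h))

theorem isDistinctSum_of_le_add_sumIoc
    (base : ∀ m, L ≤ m → m ≤ N → IsDistinctSum (fun p => P p ∧ p ≤ x) m)
    (growth : ∀ n, x ≤ n → n + L ≤ N + sumIoc P x n) (hn : x ≤ n) :
    ∀ m, L ≤ m → m ≤ N + sumIoc P x n → IsDistinctSum (fun p => P p ∧ p ≤ n) m := by
  induction n, hn using Nat.le_induction with
  | base => simpa [sumIoc_self] using base
  | succ n hn ih =>
    intro m hLm hm
    have weaken (p : ℕ) (hp : P p ∧ p ≤ n) : P p ∧ p ≤ n + 1 := ⟨hp.1, by omega⟩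
    by_cases hold : m ≤ N + sumIoc P x n
    · exact (ih m hLm hold).mono weaken
    · rw [sumIoc_succ hn] at hm
      split_ifs at hm with hP
      · have hgrowth := growth n hn
        have hsub : m - (n + 1) + (n + 1) = m := by omega
        rw [← hsub]
        exact (ih (m - (n + 1)) (by omega) (by omega)).add weaken ⟨hP, le_rfl⟩ (by omega)
      · omega

theorem isDistinctSum_of_growth
    (base : ∀ m, L ≤ m → m ≤ N → IsDistinctSum (fun p => P p ∧ p ≤ x) m)
    (growth : ∀ n, x ≤ n → n + L ≤ N + sumIoc P x n) (hm : L ≤ m) : IsDistinctSum P m := by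
  have hreach := growth (max x m) (le_max_left x m)
  exact (isDistinctSum_of_le_add_sumIoc base growth (le_max_left x m) m hm (by omega)).mono
    fun _ => And.left

theorem growth_of_le_two_mul (hxp : x < p) (hp : P p) (hqp : q ≤ 2 * p)
    (growth : ∀ n, x ≤ n → n < p → n + L ≤ N + sumIoc P x n) (hn : x ≤ n) (hnq : n < q) :
    n + L ≤ N + sumIoc P x n := by
  rcases lt_or_ge n p with hnp | hpn
  · exact growth n hn hnp
  obtain ⟨k, rfl⟩ : ∃ k, p = k + 1 := ⟨p - 1, by omega⟩
  have hk := growth k (by omega) (by omega)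
  have hmono : sumIoc P x (k + 1) ≤ sumIoc P x n := sumIoc_mono_right hpn
  rw [sumIoc_succ (by omega), if_pos hp] at hmono
  omega

end DistinctSums

/-! ### The bit set of subset sums -/

/-- The set of all sums of sublists of `l`, encoded as the number whose `m`-th binary digit is `1`
exactly when `m` is such a sum; this makes the finitely many small sums computable by the kernel. -/
def subsetSumBits : List ℕ → ℕ
  | [] => 1
  | p :: l => subsetSumBits l ||| (subsetSumBits l <<< p)

theorem isDistinctSum_of_testBit_subsetSumBits {l : List ℕ} (hl : l.Nodup) {m : ℕ}
    (hm : (subsetSumBits l).testBit m) : IsDistinctSum (· ∈ l) m := by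
  induction l generalizing m with
  | nil =>
    obtain rfl : m = 0 := Nat.testBit_one_eq_true_iff_self_eq_zero.1 hm
    exact ⟨∅, by simp, sum_empty⟩
  | cons p l ih =>
    obtain ⟨hpl, hl⟩ := List.nodup_cons.1 hl
    simp only [subsetSumBits, Nat.testBit_or, Nat.testBit_shiftLeft, Bool.or_eq_true,
      Bool.and_eq_true, decide_eq_true_eq] at hm
    have weaken (q : ℕ) (hq : q ∈ l) : q ∈ p :: l := List.mem_cons_of_mem p hq
    rcases hm with hm | ⟨hpm, hm⟩
    · exact (ih hl hm).mono weaken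
    · rw [← Nat.sub_add_cancel hpm]
      exact (ih hl hm).add weaken List.mem_cons_self hpl

/-! ### Alternating sums -/

theorem alternating_sum_mem_Icc {f : ℕ → ℝ} (hnonneg : ∀ i, 0 ≤ f i) (hanti : Antitone f) (k : ℕ) :
    ∑ i ∈ range k, (-1) ^ i * f i ∈ Set.Icc 0 (f 0) := by
  induction k generalizing f with
  | zero => simpa using hnonneg 0
  | succ k ih =>
    obtain ⟨htail_nonneg, htail_le⟩ :=
      ih (fun i => hnonneg (i + 1)) (fun i j hij => hanti (Nat.succ_le_succ hij))
    have hsplit : ∑ i ∈ range (k + 1), (-1) ^ i * f i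
        = f 0 - ∑ i ∈ range k, (-1) ^ i * f (i + 1) := by
      simp [sum_range_succ', pow_succ, sub_eq_neg_add]
    have hstep : f (0 + 1) ≤ f 0 := hanti zero_le_one
    rw [hsplit, Set.mem_Icc]
    constructor <;> linarith

theorem abs_alternating_sum_sub_le {f : ℕ → ℝ} {l : ℝ} (hanti : Antitone f)
    (hl : Tendsto (fun n => ∑ i ∈ range n, (-1) ^ i * f i) atTop (𝓝 l)) (k : ℕ) :
    |∑ i ∈ range k, (-1) ^ i * f i - l| ≤ f k := by
  have lower := hanti.alternating_series_le_tendsto hl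
  have upper := hanti.tendsto_le_alternating_series hl
  rw [abs_le]
  rcases Nat.even_or_odd' k with ⟨j, rfl | rfl⟩
  · have hlower := lower j
    have hupper := upper j
    rw [sum_range_succ, (even_two_mul j).neg_one_pow] at hupper
    constructor <;> linarith
  · have hlower := lower (j + 1)
    have hupper := upper j
    rw [Nat.mul_succ, sum_range_succ, (odd_two_mul_add_one j).neg_one_pow] at hlower
    constructor <;> linarith

/-! ### Mertens sums -/

section Mertens

/-- The Mertens sum `∑_{n ≤ N} c(n) Λ(n) / n` weighted by `c`. -/
noncomputable def mangoldtSum (c : ℕ → ℝ) (N : ℕ) : ℝ :=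
  ∑ n ∈ Ioc 0 N, c n * Λ n / n

theorem mangoldtSum_sub (c : ℕ → ℝ) {x y : ℕ} (hxy : x ≤ y) :
    mangoldtSum c y - mangoldtSum c x = ∑ n ∈ Ioc x y, c n * Λ n / n := by
  rw [mangoldtSum, mangoldtSum, ← sum_Ioc_consecutive _ (Nat.zero_le x) hxy, add_sub_cancel_left]

theorem psi_natCast (N : ℕ) : ψ N = ∑ n ∈ Ioc 0 N, Λ n := by
  rw [psi, Nat.floor_natCast]

theorem sum_log_eq_log_factorial (N : ℕ) : ∑ n ∈ Ioc 0 N, Real.log n = Real.log N.factorial := by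
  induction N with
  | zero => simp
  | succ N ih =>
    rw [sum_Ioc_succ_top (Nat.zero_le N), ih, Nat.factorial_succ, Nat.cast_mul,
      Real.log_mul (by positivity) (by positivity), add_comm]

theorem log_factorial_eq_sum_vonMangoldt (N : ℕ) :
    Real.log N.factorial = ∑ n ∈ Ioc 0 N, Λ n * (N / n : ℕ) := by
  rw [← sum_log_eq_log_factorial, ← ArithmeticFunction.sum_Ioc_mul_zeta_eq_sum,
    ArithmeticFunction.vonMangoldt_mul_zeta]
  rfl

variable {N : ℕ}

theorem log_sub_one_le_mangoldtSum_one (hN : 0 < N) : Real.log N - 1 ≤ mangoldtSum 1 N := by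
  have hN' : (0 : ℝ) < N := Nat.cast_pos.2 hN
  have stirling := Stirling.le_log_factorial_stirling hN.ne'
  have hlog : 0 ≤ Real.log N := Real.log_natCast_nonneg N
  have hlog_pi : 0 ≤ Real.log (2 * Real.pi) := Real.log_nonneg (by linarith [Real.pi_gt_three])
  have hfactorial : Real.log N.factorial ≤ N * mangoldtSum 1 N := by
    rw [log_factorial_eq_sum_vonMangoldt, mangoldtSum, mul_sum]
    refine sum_le_sum fun n _ => ?_
    calc Λ n * (N / n : ℕ) ≤ Λ n * (N / n) :=
          mul_le_mul_of_nonneg_left Nat.cast_div_le ArithmeticFunction.vonMangoldt_nonneg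
      _ = N * ((1 : ℕ → ℝ) n * Λ n / n) := by rw [Pi.one_apply]; ring
  refine le_of_mul_le_mul_left ?_ hN'
  linarith

theorem mangoldtSum_one_le (hN : 0 < N) : mangoldtSum 1 N ≤ Real.log N + ψ N / N := by
  have hN' : (0 : ℝ) < N := Nat.cast_pos.2 hN
  have hfactorial_le : Real.log N.factorial ≤ N * Real.log N := by
    rw [← Real.log_pow]
    exact Real.log_le_log (by positivity) (by exact_mod_cast Nat.factorial_le_pow N)
  have hfactorial_ge : N * mangoldtSum 1 N - ψ N ≤ Real.log N.factorial := by
    rw [log_factorial_eq_sum_vonMangoldt, mangoldtSum, psi_natCast, mul_sum, ← sum_sub_distrib]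
    refine sum_le_sum fun n _ => ?_
    have hfloor : (N : ℝ) / n - 1 ≤ (N / n : ℕ) := by
      rw [← Nat.floor_div_eq_div (K := ℝ)]
      exact (Nat.sub_one_lt_floor _).le
    calc N * ((1 : ℕ → ℝ) n * Λ n / n) - Λ n = Λ n * (N / n - 1) := by rw [Pi.one_apply]; ring
      _ ≤ Λ n * (N / n : ℕ) :=
          mul_le_mul_of_nonneg_left hfloor ArithmeticFunction.vonMangoldt_nonneg
  rw [← sub_le_iff_le_add', le_div_iff₀ hN']
  linarith

theorem sum_mul_log_div_eq_sum_vonMangoldt (c : ℕ →* ℝ) (N : ℕ) :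
    ∑ n ∈ Ioc 0 N, c n * Real.log n / n
      = ∑ d ∈ Ioc 0 N, c d * Λ d / d * ∑ m ∈ Ioc 0 (N / d), c m / m := by
  let f : ArithmeticFunction ℝ := ⟨fun d => c d * Λ d / d, by simp⟩
  let g : ArithmeticFunction ℝ := ⟨fun m => c m / m, by simp⟩
  have hconv (n : ℕ) : (f * g) n = c n * Real.log n / n := by
    rw [ArithmeticFunction.mul_apply, ← ArithmeticFunction.vonMangoldt_sum,
      ← Nat.sum_divisorsAntidiagonal (f := fun d _ => Λ d),
      mul_sum, sum_div]
    refine sum_congr rfl fun d hd => ?_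
    obtain ⟨rfl, -⟩ := Nat.mem_divisorsAntidiagonal.1 hd
    change c d.1 * Λ d.1 / d.1 * (c d.2 / d.2) = _
    rw [map_mul, Nat.cast_mul]
    ring
  simp only [← hconv]
  exact ArithmeticFunction.sum_Ioc_mul_eq_sum_sum f g N

theorem abs_sum_mul_log_div_sub_le {c : ℕ →* ℝ} (hc : ∀ n, |c n| ≤ 1) {l K : ℝ}
    (hl : ∀ M : ℕ, |∑ m ∈ Ioc 0 M, c m / m - l| ≤ K / (M + 1)) (hN : 0 < N) :
    |∑ n ∈ Ioc 0 N, c n * Real.log n / n - l * mangoldtSum c N| ≤ K * (ψ N / N) := by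
  have hN' : (0 : ℝ) < N := Nat.cast_pos.2 hN
  have hK : 0 ≤ K := by simpa using (abs_nonneg _).trans (hl 0)
  rw [sum_mul_log_div_eq_sum_vonMangoldt, mangoldtSum, mul_sum, ← sum_sub_distrib, psi_natCast,
    sum_div, mul_sum]
  refine (abs_sum_le_sum_abs _ _).trans (sum_le_sum fun d hd => ?_)
  have hd0 : 0 < d := (mem_Ioc.1 hd).1
  have hfloor : K / ((N / d : ℕ) + 1) ≤ K * (d / N) := by
    have hlt : (N : ℝ) < d * ((N / d : ℕ) + 1) := by exact_mod_cast Nat.lt_mul_div_succ N hd0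
    rw [mul_div_assoc', div_le_div_iff₀ (by positivity) hN', mul_assoc]
    gcongr
  have hweight : |c d * Λ d / d| ≤ Λ d / d := by
    rw [abs_div, abs_mul, abs_of_nonneg (ArithmeticFunction.vonMangoldt_nonneg (n := d)),
      Nat.abs_cast]
    gcongr
    exact mul_le_of_le_one_left ArithmeticFunction.vonMangoldt_nonneg (hc d)
  calc |c d * Λ d / d * ∑ m ∈ Ioc 0 (N / d), c m / m - l * (c d * Λ d / d)|
      = |c d * Λ d / d| * |∑ m ∈ Ioc 0 (N / d), c m / m - l| := by rw [← abs_mul]; ring_nf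
    _ ≤ Λ d / d * (K * (d / N)) :=
        mul_le_mul hweight ((hl _).trans hfloor) (abs_nonneg _) ((abs_nonneg _).trans hweight)
    _ = K * (Λ d / N) := by field_simp

end Mertens

/-! ### The character modulo 4 -/

section ChiFour

/-- The nontrivial Dirichlet character modulo `4`, as a real-valued function on `ℕ`. -/
def chiFour : ℕ →* ℝ :=
  ((Int.castRingHom ℝ : ℤ →* ℝ).comp ZMod.χ₄.toMonoidHom).comp (Nat.castRingHom (ZMod 4) : ℕ →* _)

theorem chiFour_eq_ite (n : ℕ) :
    chiFour n = if n % 2 = 0 then 0 else if n % 4 = 1 then 1 else -1 := by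
  have hcast : chiFour n = (ZMod.χ₄ n : ℤ) := rfl
  rw [hcast, ZMod.χ₄_nat_eq_if_mod_four]
  split_ifs <;> simp

theorem chiFour_two_mul_add_one (i : ℕ) : chiFour (2 * i + 1) = (-1) ^ i := by
  have hcast : chiFour (2 * i + 1) = (ZMod.χ₄ (2 * i + 1 : ℕ) : ℤ) := rfl
  have hhalf : (2 * i + 1) / 2 = i := by omega
  rw [hcast, ZMod.χ₄_eq_neg_one_pow (by omega), hhalf]
  simp

theorem abs_chiFour_le_one (n : ℕ) : |chiFour n| ≤ 1 := by
  rw [chiFour_eq_ite]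
  split_ifs <;> simp

theorem sum_chiFour_mul (f : ℕ → ℝ) (M : ℕ) :
    ∑ m ∈ Ioc 0 M, chiFour m * f m = ∑ i ∈ range ((M + 1) / 2), (-1) ^ i * f (2 * i + 1) := by
  induction M with
  | zero => simp
  | succ M ih =>
    rw [sum_Ioc_succ_top (Nat.zero_le M), ih]
    rcases Nat.even_or_odd' M with ⟨k, rfl | rfl⟩
    · have hlen : (2 * k + 1 + 1) / 2 = k + 1 := by omega
      have hlen' : (2 * k + 1) / 2 = k := by omega
      rw [hlen, hlen', sum_range_succ, chiFour_two_mul_add_one]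
    · have hlen : (2 * k + 1 + 1 + 1) / 2 = (2 * k + 1 + 1) / 2 := by omega
      have hzero : chiFour (2 * k + 1 + 1) = 0 := by rw [chiFour_eq_ite, if_pos (by omega)]
      rw [hlen, hzero, zero_mul, add_zero]

theorem abs_sum_chiFour_div_sub_le (M : ℕ) :
    |∑ m ∈ Ioc 0 M, chiFour m / m - Real.pi / 4| ≤ 1 / (M + 1) := by
  let f : ℕ → ℝ := fun i => ((2 * i + 1 : ℕ) : ℝ)⁻¹
  have hanti : Antitone f := fun i j hij => by dsimp only [f]; gcongr
  have leibniz : Tendsto (fun n => ∑ i ∈ range n, (-1) ^ i * f i) atTop (𝓝 (Real.pi / 4)) := by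
    simpa [f, div_eq_mul_inv] using Real.tendsto_sum_pi_div_four
  have hlen : (M : ℝ) + 1 ≤ (2 * ((M + 1) / 2) + 1 : ℕ) := by
    exact_mod_cast (by omega : M + 1 ≤ 2 * ((M + 1) / 2) + 1)
  simp only [div_eq_mul_inv (chiFour _)]
  calc |∑ m ∈ Ioc 0 M, chiFour m * (m : ℝ)⁻¹ - Real.pi / 4|
      = |∑ i ∈ range ((M + 1) / 2), (-1) ^ i * f i - Real.pi / 4| := by
        rw [sum_chiFour_mul fun m => (m : ℝ)⁻¹]
    _ ≤ f ((M + 1) / 2) := abs_alternating_sum_sub_le hanti leibniz _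
    _ ≤ 1 / (M + 1) := by rw [one_div]; exact inv_anti₀ (by positivity) hlen

theorem abs_sum_chiFour_mul_log_div_le (N : ℕ) :
    |∑ n ∈ Ioc 0 N, chiFour n * Real.log n / n| ≤ Real.log 3 / 3 := by
  let f : ℕ → ℝ := fun i => Real.log (2 * (i + 1) + 1 : ℕ) / (2 * (i + 1) + 1 : ℕ)
  have hnonneg (i : ℕ) : 0 ≤ f i := div_nonneg (Real.log_natCast_nonneg _) (Nat.cast_nonneg _)
  have exp_one_le (i : ℕ) : Real.exp 1 ≤ (2 * (i + 1) + 1 : ℕ) := by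
    push_cast
    linarith [Real.exp_one_lt_three, (Nat.cast_nonneg i : (0 : ℝ) ≤ i)]
  have hanti : Antitone f := fun i j hij =>
    Real.log_div_self_antitoneOn (exp_one_le i) (exp_one_le j) (by gcongr)
  have hf0 : f 0 = Real.log 3 / 3 := by norm_num [f]
  simp only [mul_div_assoc]
  rw [sum_chiFour_mul fun n => Real.log n / n, ← hf0]
  rcases (N + 1) / 2 with _ | k
  · simpa using hnonneg 0
  · have hshift : ∑ i ∈ range (k + 1), (-1) ^ i * (Real.log (2 * i + 1 : ℕ) / (2 * i + 1 : ℕ))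
        = -∑ i ∈ range k, (-1) ^ i * f i := by
      simp [sum_range_succ', pow_succ, f]
    obtain ⟨hsum_nonneg, hsum_le⟩ := alternating_sum_mem_Icc hnonneg hanti k
    rwa [hshift, abs_neg, abs_of_nonneg hsum_nonneg]

theorem abs_mangoldtSum_chiFour_le {N : ℕ} (hN : 0 < N) :
    Real.pi / 4 * |mangoldtSum chiFour N| ≤ Real.log 3 / 3 + ψ N / N := by
  have hcompare := abs_sum_mul_log_div_sub_le abs_chiFour_le_one abs_sum_chiFour_div_sub_le hN
  rw [one_mul] at hcompare
  have hbound := abs_sum_chiFour_mul_log_div_le N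
  rw [← abs_of_pos (by positivity : 0 < Real.pi / 4), ← abs_mul]
  rw [abs_le] at hcompare hbound ⊢
  constructor <;> linarith

end ChiFour

/-! ### Numerical bounds -/

section Numerics

theorem log_le_mul_sqrt {k : ℕ} (hk : 2 ≤ k) {y : ℝ} (hy : 2 ^ (2 * k) ≤ y) :
    Real.log y ≤ 2 * k * Real.log 2 / 2 ^ k * √y := by
  have hexp : Real.exp 2 ≤ 2 ^ (2 * k) :=
    calc Real.exp 2 = Real.exp 1 ^ 2 := by rw [← Real.exp_nat_mul]; norm_num
      _ ≤ 4 ^ 2 := by gcongr; linarith [Real.exp_one_lt_three]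
      _ = 2 ^ (2 * 2) := by norm_num
      _ ≤ 2 ^ (2 * k) := by gcongr; norm_num
  have hsqrt : √((2 : ℝ) ^ (2 * k)) = 2 ^ k := by
    rw [pow_mul', Real.sqrt_sq (by positivity)]
  have hanti := Real.log_div_sqrt_antitoneOn hexp (hexp.trans hy) hy
  have hy0 : 0 < √y := Real.sqrt_pos.2 (lt_of_lt_of_le (by positivity) hy)
  simp only [hsqrt, Real.log_pow, Nat.cast_mul, Nat.cast_ofNat] at hanti
  rwa [div_le_iff₀ hy0] at hanti

theorem psi_sub_theta_le_mul_self {k : ℕ} (hk : 2 ≤ k) {y : ℝ} (hy : 2 ^ (2 * k) ≤ y) :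
    ψ y - θ y ≤ 4 * k * Real.log 2 / 2 ^ k * y := by
  have hy1 : 1 ≤ y := (one_le_pow₀ one_le_two).trans hy
  calc ψ y - θ y ≤ 2 * √y * Real.log y := psi_sub_theta_le hy1
    _ ≤ 2 * √y * (2 * k * Real.log 2 / 2 ^ k * √y) := by gcongr; exact log_le_mul_sqrt hk hy
    _ = 4 * k * Real.log 2 / 2 ^ k * (√y * √y) := by ring
    _ = 4 * k * Real.log 2 / 2 ^ k * y := by rw [Real.mul_self_sqrt (by linarith)]

theorem psi_le_mul_self {y : ℝ} (hy : 2 ^ 36 ≤ y) : ψ y ≤ 1.4 * y := by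
  have htheta : θ y ≤ Real.log 4 * y := theta_le_log4_mul_x (by linarith)
  have hlog_four : Real.log 4 = 2 * Real.log 2 := by
    rw [← Real.log_rpow two_pos]
    norm_num
  have hdiff := psi_sub_theta_le_mul_self (k := 18) (by norm_num) hy
  have hcoeff : 2 * Real.log 2 + 4 * (18 : ℕ) * Real.log 2 / 2 ^ 18 ≤ 1.4 := by
    norm_num
    linarith [Real.log_two_lt_d9]
  rw [hlog_four] at htheta
  calc ψ y ≤ (2 * Real.log 2 + 4 * (18 : ℕ) * Real.log 2 / 2 ^ 18) * y := by linarith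
    _ ≤ 1.4 * y := by gcongr

theorem psi_div_self_le {N : ℕ} (hN : 2 ^ 36 ≤ N) : ψ N / N ≤ 1.4 := by
  rw [div_le_iff₀ (by exact_mod_cast (by omega : 0 < N))]
  exact psi_le_mul_self (by exact_mod_cast hN)

theorem abs_mangoldtSum_chiFour_le_of_ge {N : ℕ} (hN : 2 ^ 36 ≤ N) :
    |mangoldtSum chiFour N| ≤ 2.3 := by
  have hlog_three : Real.log 3 ≤ 1.2 := by
    have hpow : Real.log (3 ^ 5) ≤ Real.log (2 ^ 8) := Real.log_le_log (by norm_num) (by norm_num)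
    simp only [Real.log_pow, Nat.cast_ofNat] at hpow
    linarith [Real.log_two_lt_d9]
  have hbound := abs_mangoldtSum_chiFour_le (N := N) (by omega)
  nlinarith [psi_div_self_le hN, Real.pi_gt_d2]

end Numerics

/-! ### Primes in a class modulo 4 -/

/-- `p` is a prime congruent to `a` modulo `4`, for `a < 4`. -/
abbrev PrimeModFour (a p : ℕ) : Prop :=
  p.Prime ∧ p % 4 = a

section PrimeModFour

variable {a x y : ℕ}

theorem one_add_chiFour_mul_div_two (ha : a = 1 ∨ a = 3) {n : ℕ} (hn : n % 2 = 1) :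
    (1 + chiFour a * chiFour n) / 2 = if n % 4 = a then 1 else 0 := by
  have hn4 : n % 4 = 1 ∨ n % 4 = 3 := by omega
  rcases ha with rfl | rfl <;> rcases hn4 with h | h <;> norm_num [chiFour_eq_ite, hn, h]

theorem indicator_mul_vonMangoldt_div_le (ha : a = 1 ∨ a = 3) (hx : 2 ≤ x) {n : ℕ} (hn : x < n) :
    (1 + chiFour a * chiFour n) / 2 * (Λ n / n)
      ≤ (if PrimeModFour a n then Real.log n / n else 0) + if ¬n.Prime then Λ n / x else 0 := by
  by_cases hp : n.Prime
  · have hodd : n % 2 = 1 := hp.eq_two_or_odd.resolve_left (by omega)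
    simp [one_add_chiFour_mul_div_two ha hodd, PrimeModFour, hp,
      ArithmeticFunction.vonMangoldt_apply_prime hp]
  · have hweight : (1 + chiFour a * chiFour n) / 2 ≤ 1 := by
      have habs : |chiFour a * chiFour n| ≤ 1 := by
        rw [← map_mul]
        exact abs_chiFour_le_one _
      linarith [le_of_abs_le habs]
    rw [if_neg fun h => hp h.1, if_pos hp, zero_add]
    calc (1 + chiFour a * chiFour n) / 2 * (Λ n / n) ≤ Λ n / n :=
          mul_le_of_le_one_left (by positivity) hweight
      _ ≤ Λ n / x := by gcongr

theorem half_mangoldtSum_sub_le (ha : a = 1 ∨ a = 3) (hx : 2 ≤ x) (hxy : x ≤ y) :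
    ((mangoldtSum 1 y - mangoldtSum 1 x)
        + chiFour a * (mangoldtSum chiFour y - mangoldtSum chiFour x)) / 2
      ≤ ∑ p ∈ Ioc x y with PrimeModFour a p, Real.log p / p + (ψ y - θ y) / x := by
  have hnonprime : ∑ n ∈ Ioc x y with ¬n.Prime, Λ n / x ≤ (ψ y - θ y) / x := by
    rw [psi_sub_theta_eq_sum_not_prime, Nat.floor_natCast, ← sum_div]
    gcongr
    exact Nat.zero_le x
  calc ((mangoldtSum 1 y - mangoldtSum 1 x)
        + chiFour a * (mangoldtSum chiFour y - mangoldtSum chiFour x)) / 2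
      = ∑ n ∈ Ioc x y, (1 + chiFour a * chiFour n) / 2 * (Λ n / n) := by
        rw [mangoldtSum_sub _ hxy, mangoldtSum_sub _ hxy, mul_sum, ← sum_add_distrib, sum_div]
        refine sum_congr rfl fun n _ => ?_
        rw [Pi.one_apply]
        ring
    _ ≤ ∑ n ∈ Ioc x y, ((if PrimeModFour a n then Real.log n / n else 0)
          + if ¬n.Prime then Λ n / x else 0) :=
        sum_le_sum fun n hn => indicator_mul_vonMangoldt_div_le ha hx (mem_Ioc.1 hn).1
    _ ≤ ∑ p ∈ Ioc x y with PrimeModFour a p, Real.log p / p + (ψ y - θ y) / x := by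
        rw [sum_add_distrib, ← sum_filter, ← sum_filter]
        gcongr

theorem one_le_sum_log_div (ha : a = 1 ∨ a = 3) (hx : 2 ^ 36 ≤ x) :
    1 ≤ ∑ p ∈ Ioc x (2 ^ 14 * x) with PrimeModFour a p, Real.log p / p := by
  obtain ⟨y, hy⟩ : ∃ y, y = 2 ^ 14 * x := ⟨_, rfl⟩
  have hx0 : (0 : ℝ) < x := by exact_mod_cast (by omega : 0 < x)
  have hy' : (y : ℝ) = 2 ^ 14 * x := by exact_mod_cast hy
  have hlog : Real.log y = 14 * Real.log 2 + Real.log x := by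
    rw [hy', Real.log_mul (by positivity) hx0.ne', Real.log_pow, Nat.cast_ofNat]
  have htwisted : |chiFour a * (mangoldtSum chiFour y - mangoldtSum chiFour x)| ≤ 2.3 + 2.3 :=
    calc |chiFour a * (mangoldtSum chiFour y - mangoldtSum chiFour x)|
        ≤ |mangoldtSum chiFour y - mangoldtSum chiFour x| := by
          rw [abs_mul]
          exact mul_le_of_le_one_left (abs_nonneg _) (abs_chiFour_le_one a)
      _ ≤ |mangoldtSum chiFour y| + |mangoldtSum chiFour x| := abs_sub _ _
      _ ≤ 2.3 + 2.3 := add_le_add (abs_mangoldtSum_chiFour_le_of_ge (by omega))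
          (abs_mangoldtSum_chiFour_le_of_ge hx)
  have hnonprime : (ψ y - θ y) / x ≤ 0.04 := by
    have hdiff := psi_sub_theta_le_mul_self (k := 25) (y := y) (by norm_num)
      (by exact_mod_cast (by omega : 2 ^ (2 * 25) ≤ y))
    rw [hy'] at hdiff ⊢
    rw [div_le_iff₀ hx0]
    push_cast at hdiff
    nlinarith [Real.log_two_lt_d9]
  have hlower := log_sub_one_le_mangoldtSum_one (N := y) (by omega)
  have hupper := mangoldtSum_one_le (N := x) (by omega)
  have hhalf := half_mangoldtSum_sub_le ha (by omega : 2 ≤ x) (by omega : x ≤ y)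
  rw [← hy]
  linarith [Real.log_two_gt_d9, neg_le_of_abs_le htwisted, psi_div_self_le hx]

theorem sq_mul_sum_log_div_le (P : ℕ → Prop) [DecidablePred P] (x y : ℕ) :
    (x : ℝ) ^ 2 * ∑ p ∈ Ioc x y with P p, Real.log p / p ≤ Real.log y * sumIoc P x y := by
  rw [sumIoc, Nat.cast_sum, mul_sum, mul_sum]
  refine sum_le_sum fun p hp => ?_
  obtain ⟨hxp, hpy⟩ := mem_Ioc.1 (mem_filter.1 hp).1
  have hp0 : (0 : ℝ) < p := by exact_mod_cast (by omega : 0 < p)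
  calc (x : ℝ) ^ 2 * (Real.log p / p) ≤ (p : ℝ) ^ 2 * (Real.log p / p) := by gcongr
    _ = Real.log p * p := by field_simp
    _ ≤ Real.log y * p := by gcongr

theorem log_two_pow_mul_le (hx : 2 ^ 36 ≤ x) : Real.log (2 ^ 14 * x : ℕ) ≤ x / 2 ^ 15 := by
  have hx' : (2 : ℝ) ^ 36 ≤ x := by exact_mod_cast hx
  have hlog_sqrt := log_le_mul_sqrt (k := 25) (y := (2 ^ 14 * x : ℕ)) (by norm_num)
    (by exact_mod_cast (by omega : 2 ^ (2 * 25) ≤ 2 ^ 14 * x))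
  have hsqrt : √((2 ^ 14 * x : ℕ) : ℝ) ≤ x :=
    Real.sqrt_le_iff.2 ⟨by positivity, by push_cast; nlinarith⟩
  have hcoeff : 2 * (25 : ℕ) * Real.log 2 / 2 ^ 25 ≤ 1 / 2 ^ 15 := by
    norm_num
    linarith [Real.log_two_lt_d9]
  calc Real.log (2 ^ 14 * x : ℕ) ≤ 1 / 2 ^ 15 * x := hlog_sqrt.trans (by gcongr)
    _ = x / 2 ^ 15 := by ring

theorem add_le_sumIoc_primeModFour (ha : a = 1 ∨ a = 3) {n : ℕ} (hn : 2 ^ 50 ≤ n) :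
    n + 122 ≤ sumIoc (PrimeModFour a) (n / 2 ^ 14) n := by
  obtain ⟨x, hx⟩ : ∃ x, x = n / 2 ^ 14 := ⟨_, rfl⟩
  have hx36 : 2 ^ 36 ≤ x := by omega
  have hx0 : (0 : ℝ) < x := by exact_mod_cast (by omega : 0 < x)
  have hsum : (x : ℝ) ^ 2 ≤ x / 2 ^ 15 * sumIoc (PrimeModFour a) x (2 ^ 14 * x) :=
    calc (x : ℝ) ^ 2
        ≤ x ^ 2 * ∑ p ∈ Ioc x (2 ^ 14 * x) with PrimeModFour a p, Real.log p / p :=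
          le_mul_of_one_le_right (by positivity) (one_le_sum_log_div ha hx36)
      _ ≤ Real.log (2 ^ 14 * x : ℕ) * sumIoc (PrimeModFour a) x (2 ^ 14 * x) :=
          sq_mul_sum_log_div_le _ _ _
      _ ≤ x / 2 ^ 15 * sumIoc (PrimeModFour a) x (2 ^ 14 * x) := by
          gcongr
          exact log_two_pow_mul_le hx36
  have hreal : (2 : ℝ) ^ 15 * x ≤ sumIoc (PrimeModFour a) x (2 ^ 14 * x) := by
    refine le_of_mul_le_mul_left ?_ (div_pos hx0 (by positivity : (0 : ℝ) < 2 ^ 15))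
    linarith
  have hnat : 2 ^ 15 * x ≤ sumIoc (PrimeModFour a) x (2 ^ 14 * x) := by exact_mod_cast hreal
  have hmono : sumIoc (PrimeModFour a) x (2 ^ 14 * x) ≤ sumIoc (PrimeModFour a) x n :=
    sumIoc_mono_right (by omega)
  rw [← hx]
  omega

end PrimeModFour

/-! ### Certified primes -/

section Lucas

/-- The residue `g ^ e % p`, computed by repeated squaring; the second argument `k`,
with `e < 2 ^ k`, makes the recursion structural. -/
def powMod (p : ℕ) : ℕ → ℕ → ℕ → ℕ
  | 0, _, _ => 1 % p
  | k + 1, g, e =>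
    if e % 2 = 1 then g * powMod p k (g * g % p) (e / 2) % p else powMod p k (g * g % p) (e / 2)

theorem powMod_eq (p : ℕ) {k e : ℕ} (g : ℕ) (he : e < 2 ^ k) : powMod p k g e = g ^ e % p := by
  induction k generalizing g e with
  | zero =>
    obtain rfl : e = 0 := by simpa using he
    rw [powMod, pow_zero]
  | succ k ih =>
    have hhalf : powMod p k (g * g % p) (e / 2) = g ^ (2 * (e / 2)) % p := by
      rw [ih _ (by omega), ← Nat.pow_mod, ← pow_two, ← pow_mul]
    rw [powMod, hhalf]
    split_ifs with hodd
    · rw [Nat.mul_mod_mod, ← pow_succ']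
      congr 2
      omega
    · congr 2
      omega

theorem prime_of_generator {p g M k : ℕ} (hp : 1 < p) (hM : M ≠ 0) (hdvd : p - 1 ∣ M ^ k)
    (hpow : g ^ (p - 1) % p = 1)
    (hne : ∀ q ∈ M.primeFactors, q ∣ p - 1 → g ^ ((p - 1) / q) % p ≠ 1) : p.Prime := by
  have cast_pow_eq_one (e : ℕ) : (g : ZMod p) ^ e = 1 ↔ g ^ e % p = 1 := by
    rw [← Nat.cast_pow, ← Nat.cast_one, ZMod.natCast_eq_natCast_iff', Nat.mod_eq_of_lt hp]
  refine lucas_primality p (g : ZMod p) ((cast_pow_eq_one _).2 hpow) fun q hq hqp h => ?_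
  have hqM : q ∈ M.primeFactors :=
    Nat.mem_primeFactors.2 ⟨hq, hq.dvd_of_dvd_pow (hqp.trans hdvd), hM⟩
  exact hne q hqM hqp ((cast_pow_eq_one _).1 h)

/-- A computable certificate that `g` is a primitive root modulo `p < 2 ^ 60`, where `p - 1` has no
prime factors beyond `2, 3, 5, 7`. -/
abbrev IsLucasWitness (p g : ℕ) : Prop :=
  1 < p ∧ p < 2 ^ 60 ∧ p - 1 ∣ 210 ^ 60 ∧ powMod p 60 g (p - 1) = 1 ∧
    ∀ q ∈ [2, 3, 5, 7], q ∣ p - 1 → powMod p 60 g ((p - 1) / q) ≠ 1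

theorem IsLucasWitness.prime {p g : ℕ} (h : IsLucasWitness p g) : p.Prime := by
  obtain ⟨hp, hp60, hdvd, hpow, hne⟩ := h
  have hfactors : Nat.primeFactors 210 = {2, 3, 5, 7} := by decide +kernel
  refine prime_of_generator (g := g) hp (by norm_num) hdvd ?_ fun q hq hqp => ?_
  · rwa [← powMod_eq (k := 60) p g (by omega)]
  · rw [← powMod_eq (k := 60) p g ((Nat.div_le_self _ q).trans_lt (by omega))]
    exact hne q (by simpa [hfactors] using hq) hqp

end Lucas

/-! ### Growth below `2 ^ 50` -/

section Chains

/-- Consecutive entries `(p, g)` and `(q, _)` of a list of primes congruent to `a` modulo `4`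
beyond `113`, each certified by its primitive root `g`: the next entry is at most twice as large. -/
abbrev IsDoublingStep (a : ℕ) (s t : ℕ × ℕ) : Prop :=
  113 < s.1 ∧ IsLucasWitness s.1 s.2 ∧ s.1 % 4 = a ∧ t.1 ≤ 2 * s.1

/-- Pairs `(p, g)` of a prime `p ≡ 1 [MOD 4]` with `p - 1` a product of powers of `2, 3, 5, 7` and a
primitive root `g` modulo `p`, each prime at most twice its predecessor. The last entry is not a
prime: it records that the chain reaches `2 ^ 50`. -/
def chainOne : List (ℕ × ℕ) :=
  [(541, 2), (1009, 11), (2017, 5), (4001, 3), (7841, 12), (15361, 7), (30241, 11), (58321, 11),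
   (115249, 17), (211681, 13), (420001, 11), (839809, 7), (1620001, 13), (3161089, 11),
   (6174001, 38), (12192769, 11), (24000001, 23), (47628001, 46), (94500001, 11),
   (188160001, 17), (372008701, 22), (740710657, 10), (1470276361, 39), (2916548209, 23),
   (5833096417, 5), (11664000001, 21), (23245229341, 6), (46467993601, 11), (92522938369, 29),
   (184354652161, 29), (367416000001, 11), (729303750001, 13), (1452124800001, 13),
   (2903040000001, 17), (5764801000001, 3), (11520000000001, 17), (22781250000001, 17),
   (45562500000001, 11), (90737055360001, 19), (181269430272001, 13), (361267200000001, 19),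
   (720300000000001, 13), (1440270720000001, 11), (2 ^ 50, 0)]

/-- The analogue of `chainOne` for primes `p ≡ 3 [MOD 4]`. -/
def chainThree : List (ℕ × ℕ) :=
  [(491, 2), (883, 2), (1471, 6), (2647, 3), (4051, 10), (7351, 6), (14407, 19), (28351, 6),
   (51031, 3), (85751, 14), (168071, 7), (328051, 2), (595351, 7), (1093751, 7), (1968751, 6),
   (3543751, 6), (5834431, 3), (10588411, 3), (20837251, 7), (40841011, 12), (73811251, 2),
   (145860751, 3), (287043751, 3), (516678751, 6), (1021025251, 2), (1562793751, 3),
   (2871093751, 3), (5627343751, 3), (10850253751, 14), (21618003751, 12), (41682334807, 5),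
   (81358302691, 3), (162097968691, 7), (313810596091, 3), (625235022091, 7),
   (1220374540351, 13), (2269890393751, 7), (3752267793751, 3), (7354444875751, 3),
   (14354885711251, 3), (26160032809891, 2), (48449707031251, 3), (94186230468751, 3),
   (172337402343751, 12), (308957303593751, 7), (608006355468751, 3), (1186746503906251, 3),
   (2 ^ 50, 0)]

theorem isChain_chainOne : chainOne.IsChain (IsDoublingStep 1) := by
  decide +kernel

theorem isChain_chainThree : chainThree.IsChain (IsDoublingStep 3) := by
  decide +kernel

theorem growth_of_isChain {a : ℕ} {l : List (ℕ × ℕ)} (hl : l.IsChain (IsDoublingStep a))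
    (hhead : ∀ s ∈ l.head?, s.1 ≤ 576) {s : ℕ × ℕ} (hs : s ∈ l) {n : ℕ} (hn : 113 ≤ n)
    (hns : n < s.1) : n + 122 ≤ 697 + sumIoc (PrimeModFour a) 113 n := by
  refine hl.induction (fun s => ∀ n, 113 ≤ n → n < s.1 →
    n + 122 ≤ 697 + sumIoc (PrimeModFour a) 113 n) l ?_ ?_ s hs n hn hns
  · rintro s t ⟨hs113, hs, hsa, hts⟩ ih n hn hnt
    exact growth_of_le_two_mul hs113 ⟨hs.prime, hsa⟩ hts ih hn hnt
  · intro hne n _ hn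
    have hle := hhead _ (List.head_mem_head? hne)
    omega

theorem growth_primeModFour_of_lt {a : ℕ} (ha : a = 1 ∨ a = 3) {n : ℕ} (hn : 113 ≤ n)
    (hn50 : n < 2 ^ 50) : n + 122 ≤ 697 + sumIoc (PrimeModFour a) 113 n := by
  rcases ha with rfl | rfl
  · exact growth_of_isChain isChain_chainOne (by simp [chainOne])
      (by simp [chainOne] : (2 ^ 50, 0) ∈ chainOne) hn hn50
  · exact growth_of_isChain isChain_chainThree (by simp [chainThree])
      (by simp [chainThree] : (2 ^ 50, 0) ∈ chainThree) hn hn50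

end Chains

/-! ### Small sums -/

theorem isDistinctSum_one_of_lt {m : ℕ} (hm : m < 698) (hme : m ∉ exceptionalSet) :
    IsDistinctSum (fun p => PrimeModFour 1 p ∧ p ≤ 113) m := by
  let l := [5, 13, 17, 29, 37, 41, 53, 61, 73, 89, 97, 101, 109, 113]
  have hbits : ∀ m < 698, m ∉ exceptionalSet → (subsetSumBits l).testBit m := by decide +kernel
  have hprimes : ∀ p ∈ l, PrimeModFour 1 p ∧ p ≤ 113 := by norm_num [l, PrimeModFour]
  exact (isDistinctSum_of_testBit_subsetSumBits (by decide) (hbits m hm hme)).mono hprimes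

theorem isDistinctSum_three_of_lt {m : ℕ} (hm : m < 698) (hme : m ∉ exceptionalSet) :
    IsDistinctSum (fun p => PrimeModFour 3 p ∧ p ≤ 113) m := by
  let l := [3, 7, 11, 19, 23, 31, 43, 47, 59, 67, 71, 79, 83, 103, 107]
  have hbits : ∀ m < 698, m ∉ exceptionalSet → (subsetSumBits l).testBit m := by decide +kernel
  have hprimes : ∀ p ∈ l, PrimeModFour 3 p ∧ p ≤ 113 := by norm_num [l, PrimeModFour]
  exact (isDistinctSum_of_testBit_subsetSumBits (by decide) (hbits m hm hme)).mono hprimes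

/-! ### The representation theorem -/

theorem notMem_exceptionalSet {m : ℕ} (hm : 122 ≤ m) : m ∉ exceptionalSet := by
  simp only [exceptionalSet, mem_union, mem_Icc, mem_insert, mem_singleton]
  omega

theorem growth_primeModFour {a : ℕ} (ha : a = 1 ∨ a = 3) {n : ℕ} (hn : 113 ≤ n) :
    n + 122 ≤ 697 + sumIoc (PrimeModFour a) 113 n := by
  rcases lt_or_ge n (2 ^ 50) with hlt | hge
  · exact growth_primeModFour_of_lt ha hn hlt
  · have hlarge := add_le_sumIoc_primeModFour ha hge
    have hanti : sumIoc (PrimeModFour a) (n / 2 ^ 14) n ≤ sumIoc (PrimeModFour a) 113 n :=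
      sumIoc_anti_left (by omega)
    omega

theorem isDistinctSum_primeModFour {a : ℕ} (ha : a = 1 ∨ a = 3) {m : ℕ}
    (hme : m ∉ exceptionalSet) : IsDistinctSum (PrimeModFour a) m := by
  have small {k : ℕ} (hk : k < 698) (hke : k ∉ exceptionalSet) :
      IsDistinctSum (fun p => PrimeModFour a p ∧ p ≤ 113) k := by
    rcases ha with rfl | rfl
    exacts [isDistinctSum_one_of_lt hk hke, isDistinctSum_three_of_lt hk hke]
  rcases lt_or_ge m 698 with hlt | hge
  · exact (small hlt hme).mono fun _ => And.left
  · exact isDistinctSum_of_growth (L := 122) (N := 697)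
      (fun k hLk hkN => small (by omega) (notMem_exceptionalSet hLk))
      (fun n => growth_primeModFour ha) (by omega)

end DistinctPrimeSums

/-- Every positive integer `m` not lying in the exceptional set can be written both as a
sum of distinct primes congruent to `1` modulo `4` and as a sum of distinct primes
congruent to `3` modulo `4`. -/
theorem stmt9 (m : ℕ) (hm : 0 < m) (hme : m ∉ exceptionalSet) :
    (∃ T₁ : Finset ℕ, T₁.Nonempty ∧ (∀ p ∈ T₁, p.Prime ∧ p % 4 = 1) ∧ ∑ p ∈ T₁, p = m) ∧
    (∃ T₂ : Finset ℕ, T₂.Nonempty ∧ (∀ q ∈ T₂, q.Prime ∧ q % 4 = 3) ∧ ∑ q ∈ T₂, q = m) :=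
  ⟨(DistinctPrimeSums.isDistinctSum_primeModFour (Or.inl rfl) hme).exists_nonempty hm,
    (DistinctPrimeSums.isDistinctSum_primeModFour (Or.inr rfl) hme).exists_nonempty hm⟩
end

section
/- Every positive integer m not belonging to the set {1, 2, 3, 4, 5, 6, 7, 8, 9, 10, 11, 12, 13, 14, 15, 17, 21, 25, 27} admits two representations as a sum of distinct primes, m = p₁ + ⋯ + p_k = q₁ + ⋯ + q_ℓ with k, ℓ ≥ 1, such that the set of primes {p₁, …, p_k} is disjoint from the set of primes {q₁, …, q_ℓ}. -/
/-!
Call a finite set `s` of naturals *good* if every pair `(a, b)` of numbers `≥ 28` whose sum is at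
most `∑ s - 7` is realised by disjoint subsets of `s` with sums `a` and `b`. The primes up to `29`
form a good set, by a finite search. If `s` is good and `p ∉ s` satisfies `2 p + 62 ≤ ∑ s`, then
`insert p s` is good: a pair whose sum is too large for `s` has a component `≥ p + 28`, and `p` is
used for that component. The sum of the primes up to `n` is at least `2 n + 64` for `n ≥ 30`: the
estimate `2 ^ n ≤ (n + 1) * lcm (1, …, n) ≤ (n + 1) ^ (π n + 1)` bounds `π n`, hence that sum, from
below. So all sets of primes up to `n ≥ 29` are good, and `m ≥ 28` is handled by the pair `(m, m)`.
-/

open Finset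
open scoped Nat.Prime

section DisjointSums

variable {M : Type*} [AddCommMonoid M] {s t : Finset M} {a b p : M}

/-- `a` and `b` are the sums of two disjoint subsets of `s`. The subsets may be empty. -/
def HasDisjointSums (s : Finset M) (a b : M) : Prop :=
  ∃ T ⊆ s, ∃ U ⊆ s, Disjoint T U ∧ ∑ x ∈ T, x = a ∧ ∑ x ∈ U, x = b

namespace HasDisjointSums

theorem mono (h : HasDisjointSums s a b) (hst : s ⊆ t) : HasDisjointSums t a b := by
  obtain ⟨T, hT, U, hU, hTU⟩ := h
  exact ⟨T, hT.trans hst, U, hU.trans hst, hTU⟩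

theorem symm (h : HasDisjointSums s a b) : HasDisjointSums s b a := by
  obtain ⟨T, hT, U, hU, hTU, hTa, hUb⟩ := h
  exact ⟨U, hU, T, hT, hTU.symm, hUb, hTa⟩

theorem insert_left [DecidableEq M] (h : HasDisjointSums s a b) (hp : p ∉ s) :
    HasDisjointSums (insert p s) (p + a) b := by
  obtain ⟨T, hT, U, hU, hTU, rfl, rfl⟩ := h
  exact ⟨insert p T, insert_subset_insert p hT, U, hU.trans (subset_insert p s),
    disjoint_insert_left.2 ⟨fun hpU => hp (hU hpU), hTU⟩, sum_insert fun hpT => hp (hT hpT), rfl⟩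

theorem insert_right [DecidableEq M] (h : HasDisjointSums s a b) (hp : p ∉ s) :
    HasDisjointSums (insert p s) a (p + b) :=
  (h.symm.insert_left hp).symm

end HasDisjointSums

end DisjointSums

/-- Exhaustive search for two disjoint sublists of a list with sums `a` and `b`: each entry goes
to the first sublist, to the second one, or to neither. -/
def searchDisjointSums : List ℕ → ℕ → ℕ → Bool
  | [], a, b => a == 0 && b == 0
  | p :: l, a, b => (p.ble a && searchDisjointSums l (a - p) b) ||
      ((p.ble b && searchDisjointSums l a (b - p)) || searchDisjointSums l a b)

theorem hasDisjointSums_of_search {l : List ℕ} (hl : l.Nodup) {a b : ℕ}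
    (h : searchDisjointSums l a b = true) : HasDisjointSums l.toFinset a b := by
  induction l generalizing a b with
  | nil =>
    obtain ⟨rfl, rfl⟩ : a = 0 ∧ b = 0 := by simpa [searchDisjointSums] using h
    exact ⟨∅, Subset.rfl, ∅, Subset.rfl, disjoint_empty_left ∅, rfl, rfl⟩
  | cons p l ih =>
    obtain ⟨hpl, hl⟩ := List.nodup_cons.1 hl
    have hp : p ∉ l.toFinset := by rwa [List.mem_toFinset]
    rw [List.toFinset_cons]
    simp only [searchDisjointSums, Bool.or_eq_true, Bool.and_eq_true, Nat.ble_eq] at h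
    rcases h with ⟨hpa, h⟩ | ⟨hpb, h⟩ | h
    · simpa only [Nat.add_sub_cancel' hpa] using (ih hl h).insert_left hp
    · simpa only [Nat.add_sub_cancel' hpb] using (ih hl h).insert_right hp
    · exact (ih hl h).mono (subset_insert p _)

/-- The induction hypothesis of the argument: all pairs of numbers `≥ L` are sums of disjoint
subsets of `s`, as long as at least `d` of the total sum of `s` is left over. -/
def CoversPairs (L d : ℕ) (s : Finset ℕ) : Prop :=
  ∀ a b, L ≤ a → L ≤ b → a + b + d ≤ ∑ x ∈ s, x → HasDisjointSums s a b

theorem CoversPairs.insert {L d p : ℕ} {s : Finset ℕ} (h : CoversPairs L d s) (hp : p ∉ s)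
    (hsum : 2 * (p + L) + d ≤ ∑ x ∈ s, x + 1) : CoversPairs L d (insert p s) := by
  intro a b ha hb hab
  wlog hle : b ≤ a generalizing a b
  · exact (this b a hb ha (by rwa [add_comm b a]) (le_of_not_ge hle)).symm
  rw [sum_insert hp] at hab
  by_cases hfit : a + b + d ≤ ∑ x ∈ s, x
  · exact (h a b ha hb hfit).mono (subset_insert p s)
  · have hpa : p + L ≤ a := by omega
    have hrest : HasDisjointSums s (a - p) b := h _ _ (by omega) hb (by omega)
    simpa only [Nat.add_sub_cancel' (le_of_add_le_left hpa)] using hrest.insert_left hp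

theorem card_mul_card_sub_one_le_two_mul_sum (s : Finset ℕ) :
    #s * (#s - 1) ≤ 2 * ∑ x ∈ s, x := by
  have hle : ∑ i ∈ range #s, i ≤ ∑ x ∈ s, x := by
    have hcast := sum_range_le_sum (s := s.map (Nat.castEmbedding (R := ℤ))) (c := 0) (by simp)
    simp only [card_map, zero_add, sum_map, Nat.castEmbedding_apply] at hcast
    zify
    exact hcast
  linarith [sum_range_id_mul_two #s]

theorem lcmUpto_le_pow_primeCounting (n : ℕ) : Nat.lcmUpto n ≤ n ^ π n := by
  rcases eq_or_ne n 0 with rfl | hn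
  · decide
  rw [Nat.lcmUpto_eq_prod_pow_log, ← Nat.primesLE_card_eq_primeCounting]
  exact prod_le_pow_card _ _ _ fun p _ => Nat.pow_log_le_self p hn

theorem le_log_succ_mul_primeCounting_succ (n : ℕ) :
    n ≤ (Nat.log 2 n + 1) * (π n + 1) := by
  have hn : n + 1 ≤ 2 ^ (Nat.log 2 n + 1) := Nat.lt_pow_succ_log_self one_lt_two n
  refine (Nat.pow_le_pow_iff_right one_lt_two).1 ?_
  calc 2 ^ n ≤ (n + 1) * Nat.lcmUpto n := Chebyshev.two_pow_le_mul_lcmUpto n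
    _ ≤ (n + 1) * (n + 1) ^ π n := by
      gcongr
      exact (lcmUpto_le_pow_primeCounting n).trans (Nat.pow_le_pow_left n.le_succ _)
    _ = (n + 1) ^ (π n + 1) := (pow_succ' _ _).symm
    _ ≤ (2 ^ (Nat.log 2 n + 1)) ^ (π n + 1) := by gcongr
    _ = 2 ^ ((Nat.log 2 n + 1) * (π n + 1)) := (pow_mul _ _ _).symm

theorem succ_mul_le_two_pow {k : ℕ} (hk : 9 ≤ k) : (k + 1) * (4 * k + 10) ≤ 2 ^ k := by
  induction k, hk using Nat.le_induction with
  | base => norm_num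
  | succ k hk ih => rw [pow_succ]; nlinarith

theorem four_mul_log_add_nine_le_primeCounting {n : ℕ} (hn : 512 ≤ n) :
    4 * Nat.log 2 n + 9 ≤ π n := by
  have hk : 9 ≤ Nat.log 2 n := Nat.le_log_of_pow_le one_lt_two hn
  have hmul : (Nat.log 2 n + 1) * (4 * Nat.log 2 n + 10) ≤ (Nat.log 2 n + 1) * (π n + 1) :=
    calc _ ≤ 2 ^ Nat.log 2 n := succ_mul_le_two_pow hk
      _ ≤ n := Nat.pow_log_le_self 2 (by omega)
      _ ≤ _ := le_log_succ_mul_primeCounting_succ n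
  have := Nat.le_of_mul_le_mul_left hmul (Nat.succ_pos _)
  omega

theorem sum_primesLE_le_sum_primesLE {m n : ℕ} (hmn : m ≤ n) :
    ∑ p ∈ Nat.primesLE m, p ≤ ∑ p ∈ Nat.primesLE n, p :=
  sum_le_sum_of_subset (Nat.primesLE_mono hmn)

theorem two_mul_add_le_sum_primesLE_of_ge {n : ℕ} (hn : 512 ≤ n) :
    2 * n + 64 ≤ ∑ p ∈ Nat.primesLE n, p := by
  have hk : 9 ≤ Nat.log 2 n := Nat.le_log_of_pow_le one_lt_two hn
  have hpi := four_mul_log_add_nine_le_primeCounting hn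
  have hle := le_log_succ_mul_primeCounting_succ n
  have hsum := card_mul_card_sub_one_le_two_mul_sum (Nat.primesLE n)
  obtain ⟨r, hr⟩ : ∃ r, π n = r + 1 := Nat.exists_eq_add_one.2 (by omega)
  rw [hr] at hle hpi
  rw [Nat.primesLE_card_eq_primeCounting, hr, Nat.add_sub_cancel] at hsum
  have hquad : 4 * n + 4 * (r + 2) ≤ r * (r + 2) :=
    calc 4 * n + 4 * (r + 2) ≤ (4 * Nat.log 2 n + 8) * (r + 2) := by linarith
      _ ≤ r * (r + 2) := by gcongr; omega
  linarith

theorem two_mul_add_le_sum_primesLE {n : ℕ} (hn : 30 ≤ n) :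
    2 * n + 64 ≤ ∑ p ∈ Nat.primesLE n, p := by
  rcases le_or_gt 512 n with hlarge | hsmall
  · exact two_mul_add_le_sum_primesLE_of_ge hlarge
  have h30 : ∑ p ∈ Nat.primesLE 30, p = 129 := by decide +kernel
  have h31 : ∑ p ∈ Nat.primesLE 31, p = 160 := by decide +kernel
  have h47 : ∑ p ∈ Nat.primesLE 47, p = 328 := by decide +kernel
  have h113 : ∑ p ∈ Nat.primesLE 113, p = 1593 := by decide +kernel
  rcases show n = 30 ∨ (31 ≤ n ∧ n ≤ 48) ∨ (47 ≤ n ∧ n ≤ 132) ∨ 113 ≤ n by omega with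
    rfl | ⟨hlo, hhi⟩ | ⟨hlo, hhi⟩ | hlo
  · exact h30.ge.trans' (by norm_num)
  all_goals linarith [sum_primesLE_le_sum_primesLE hlo]

theorem hasDisjointSums_primesLE_twenty_nine_of_search {a b : ℕ}
    (h : searchDisjointSums [29, 23, 19, 17, 13, 11, 7, 5, 3, 2] a b = true) :
    HasDisjointSums (Nat.primesLE 29) a b := by
  have hprimes : [29, 23, 19, 17, 13, 11, 7, 5, 3, 2].toFinset = Nat.primesLE 29 := by
    decide +kernel
  exact hprimes ▸ hasDisjointSums_of_search (by decide) h

theorem coversPairs_primesLE_twenty_nine : CoversPairs 28 7 (Nat.primesLE 29) := by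
  have hsum : ∑ p ∈ Nat.primesLE 29, p = 129 := by decide +kernel
  have hsearch : ∀ a ∈ Icc 28 94, ∀ b ∈ Icc 28 (122 - a),
      searchDisjointSums [29, 23, 19, 17, 13, 11, 7, 5, 3, 2] a b = true := by decide +kernel
  intro a b ha hb hab
  exact hasDisjointSums_primesLE_twenty_nine_of_search
    (hsearch a (mem_Icc.2 ⟨ha, by omega⟩) b (mem_Icc.2 ⟨hb, by omega⟩))

theorem coversPairs_primesLE {n : ℕ} (hn : 29 ≤ n) : CoversPairs 28 7 (Nat.primesLE n) := by
  induction n, hn using Nat.le_induction with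
  | base => exact coversPairs_primesLE_twenty_nine
  | succ n hn ih =>
    rw [Nat.primesLE_succ]
    split_ifs with hp
    · have hne : n ≠ 29 := by rintro rfl; norm_num at hp
      have hsum := two_mul_add_le_sum_primesLE (n := n) (by omega)
      exact ih.insert (Nat.notMem_primesLE n) (by omega)
    · exact ih

theorem hasDisjointSums_primesLE_self {m : ℕ} (hm : 28 ≤ m) :
    HasDisjointSums (Nat.primesLE (m + 2)) m m := by
  have hsum := two_mul_add_le_sum_primesLE (n := m + 2) (by omega)
  exact coversPairs_primesLE (by omega) m m hm hm (by omega)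

theorem hasDisjointSums_primesLE_self_of_lt {m : ℕ} (hm : m < 28)
    (hme : m ∉ ({1, 2, 3, 4, 5, 6, 7, 8, 9, 10, 11, 12, 13, 14, 15, 17, 21, 25, 27} :
      Finset ℕ)) :
    HasDisjointSums (Nat.primesLE 29) m m := by
  refine hasDisjointSums_primesLE_twenty_nine_of_search ?_
  revert m
  decide +kernel

/-- Every positive integer `m` outside `{1, …, 15, 17, 21, 25, 27}` admits two
representations as a sum of distinct primes using disjoint sets of primes: there are
nonempty finite sets of primes `T₁` and `T₂` with `T₁ ∩ T₂ = ∅`, each summing to `m`. -/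
theorem stmt10 (m : ℕ) (hm : 0 < m)
    (hme : m ∉ ({1, 2, 3, 4, 5, 6, 7, 8, 9, 10, 11, 12, 13, 14, 15, 17, 21, 25, 27} :
      Finset ℕ)) :
    ∃ T₁ T₂ : Finset ℕ, T₁.Nonempty ∧ T₂.Nonempty ∧ Disjoint T₁ T₂ ∧
      (∀ p ∈ T₁, p.Prime) ∧ (∀ q ∈ T₂, q.Prime) ∧
      ∑ p ∈ T₁, p = m ∧ ∑ q ∈ T₂, q = m := by
  obtain ⟨n, T₁, hT₁, T₂, hT₂, hdisj, hsum₁, hsum₂⟩ :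
      ∃ n, HasDisjointSums (Nat.primesLE n) m m := by
    rcases lt_or_ge m 28 with hsmall | hlarge
    · exact ⟨29, hasDisjointSums_primesLE_self_of_lt hsmall hme⟩
    · exact ⟨m + 2, hasDisjointSums_primesLE_self hlarge⟩
  exact ⟨T₁, T₂, nonempty_of_sum_ne_zero (hsum₁ ▸ hm.ne'), nonempty_of_sum_ne_zero (hsum₂ ▸ hm.ne'),
    hdisj, fun _ hp => Nat.prime_of_mem_primesLE (hT₁ hp),
    fun _ hq => Nat.prime_of_mem_primesLE (hT₂ hq), hsum₁, hsum₂⟩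
end

section
/- Let n ≥ 4 be an integer such that neither n nor n−1 is a prime number. Then the reduced order-super-commuting graph Δᵒ(Sₙ)* of the symmetric group Sₙ (the graph obtained from Δᵒ(Sₙ) by deleting the identity permutation, which is its unique dominant vertex) is connected and has diameter exactly 3. -/
/-- The reduced order-super-commuting graph `Δᵒ(Sₙ)*` of the symmetric group on `n`
letters: its vertices are the non-identity permutations (the identity being the unique
dominant vertex of `Δᵒ(Sₙ)` for `n ≥ 4`), and two distinct vertices `x, y` are adjacent
iff there exist commuting `u, v` (possibly `u = v`) with `|u| = |x|` and `|v| = |y|`. -/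
def reducedOrderSuperCommutingGraph (n : ℕ) :
    SimpleGraph {x : Equiv.Perm (Fin n) // x ≠ 1} where
  Adj x y := x ≠ y ∧ ∃ u v : Equiv.Perm (Fin n),
    orderOf u = orderOf (x : Equiv.Perm (Fin n)) ∧
    orderOf v = orderOf (y : Equiv.Perm (Fin n)) ∧ Commute u v
  symm := by
    constructor
    rintro x y ⟨hxy, u, v, hu, hv, huv⟩
    exact ⟨hxy.symm, v, u, hv, hu, huv.symm⟩
  loopless := by constructor; rintro x ⟨h, -⟩; exact h rfl

/-!
Adjacency only depends on the orders of the two permutations, and `Sₙ` has an element of order `a`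
exactly when the sum `deg a` (`minPermDegree a` below) of the prime powers exactly dividing `a` is
at most `n`.

*Upper bound.* A vertex `x` is adjacent to one of order `p`, the least prime factor of `|x|`, and
two primes with `p + q ≤ n` are orders of commuting permutations. If `|x|` and `|y|` are composite,
their least prime factors are at most `n / 2`. If `|x|` is a prime, it is at most `n - 2` by
hypothesis, so `x` is adjacent to the transpositions, which are adjacent to every prime order.

*Lower bound.* Suppose that `a` and `b` are coprime, `b` is odd, `n - 2 ≤ deg a ≤ n` and
`n - 1 ≤ deg b ≤ n`. If elements of prime order `q` commute with elements of order `a` and of order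
`b`, then `q ∣ b`, as an element of order `b` leaves at most one letter free. Hence `q` is odd and
does not divide `a`, so it does not fit into the at most two letters left free by an element of
order `a`. Such `a` and `b` are built by distributing the primes below `N` greedily over a pool for
`a` and one for `b`: if the degrees attained by a pool reach `N` without large gaps, adding the
prime `N` to it prolongs this range by `N`. The ranges never fall short because the sum of the
primes below `N` is at least `3 * N`, by Chebyshev's lower bound on the number of primes.
-/

open Finset

/-- The least `n` such that the symmetric group on `n` letters has an element of order `a`
(see `exists_perm_orderOf_eq` and `minPermDegree_orderOf_le_card`): the sum of the prime powers
exactly dividing `a`. The junk value at `a = 0` is `0`. -/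
def minPermDegree (a : ℕ) : ℕ :=
  a.factorization.sum fun p k => p ^ k

@[simp]
theorem minPermDegree_zero : minPermDegree 0 = 0 := by
  simp [minPermDegree]

@[simp]
theorem minPermDegree_one : minPermDegree 1 = 0 := by
  simp [minPermDegree]

theorem minPermDegree_prime_pow {p : ℕ} (hp : p.Prime) (k : ℕ) :
    minPermDegree (p ^ k) = if k = 0 then 0 else p ^ k := by
  split_ifs with hk
  · simp [hk]
  · rw [minPermDegree, hp.factorization_pow, Finsupp.sum, Finsupp.support_single _ hk]
    simp

theorem minPermDegree_prime {p : ℕ} (hp : p.Prime) : minPermDegree p = p := by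
  simpa using minPermDegree_prime_pow hp 1

theorem minPermDegree_mul_of_coprime {a b : ℕ} (h : a.Coprime b) :
    minPermDegree (a * b) = minPermDegree a + minPermDegree b := by
  rw [minPermDegree, Nat.factorization_mul_of_coprime h,
    Finsupp.sum_add_index_of_disjoint h.disjoint_primeFactors]
  rfl

theorem minPermDegree_le_of_dvd {a b : ℕ} (hb : b ≠ 0) (h : a ∣ b) :
    minPermDegree a ≤ minPermDegree b := by
  have ha : a ≠ 0 := ne_zero_of_dvd_ne_zero hb h
  calc minPermDegree a
    _ ≤ ∑ p ∈ a.primeFactors, p ^ b.factorization p :=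
        sum_le_sum fun p hp => Nat.pow_le_pow_right (Nat.pos_of_mem_primeFactors hp)
          ((Nat.factorization_le_iff_dvd ha hb).mpr h p)
    _ ≤ minPermDegree b := sum_le_sum_of_subset (Nat.primeFactors_mono h hb)

theorem minPermDegree_le_self (a : ℕ) : minPermDegree a ≤ a := by
  induction a using Nat.recOnPosPrimePosCoprime with
  | zero => exact minPermDegree_zero.le
  | one => exact minPermDegree_one.le.trans zero_le_one
  | prime_pow p k hp hk => rw [minPermDegree_prime_pow hp, if_neg hk.ne']
  | coprime a b ha hb hab iha ihb =>
    rw [minPermDegree_mul_of_coprime hab]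
    nlinarith

theorem minPermDegree_lcm_le (a b : ℕ) :
    minPermDegree (a.lcm b) ≤ minPermDegree a + minPermDegree b := by
  rcases eq_or_ne a 0 with rfl | ha
  · simp
  rcases eq_or_ne b 0 with rfl | hb
  · simp
  rw [← Nat.factorizationLCMLeft_mul_factorizationLCMRight ha hb,
    minPermDegree_mul_of_coprime (Nat.coprime_factorizationLCMLeft_factorizationLCMRight a b)]
  exact add_le_add (minPermDegree_le_of_dvd ha (Nat.factorizationLCMLeft_dvd_left a b))
    (minPermDegree_le_of_dvd hb (Nat.factorizationLCMRight_dvd_right a b))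

theorem minPermDegree_multiset_lcm_le_sum (s : Multiset ℕ) : minPermDegree s.lcm ≤ s.sum := by
  induction s using Multiset.induction with
  | empty => simp
  | cons a s ih =>
    rw [Multiset.lcm_cons, Multiset.sum_cons]
    exact (minPermDegree_lcm_le a s.lcm).trans (add_le_add (minPermDegree_le_self a) ih)

theorem minFac_le_minPermDegree {a : ℕ} (ha₀ : a ≠ 0) (ha₁ : a ≠ 1) :
    a.minFac ≤ minPermDegree a :=
  calc a.minFac
    _ = minPermDegree a.minFac := (minPermDegree_prime (Nat.minFac_prime ha₁)).symm
    _ ≤ minPermDegree a := minPermDegree_le_of_dvd ha₀ a.minFac_dvd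

theorem two_mul_minFac_le_minPermDegree {a : ℕ} (ha₀ : a ≠ 0) (ha₁ : a ≠ 1) (ha : ¬ a.Prime) :
    2 * a.minFac ≤ minPermDegree a := by
  obtain ⟨c, hc⟩ := a.minFac_dvd
  have hp := Nat.minFac_prime ha₁
  have hc₁ : c ≠ 1 := by
    rintro rfl
    exact ha ((hc.trans (mul_one _)).symm ▸ hp)
  have hq := Nat.minFac_prime hc₁
  have hdvd : a.minFac * c.minFac ∣ a := by
    conv_rhs => rw [hc]
    exact mul_dvd_mul_left _ c.minFac_dvd
  have hle : a.minFac ≤ c.minFac :=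
    Nat.minFac_le_of_dvd hq.two_le (dvd_of_mul_left_dvd hdvd)
  refine le_trans ?_ (minPermDegree_le_of_dvd ha₀ hdvd)
  rcases eq_or_ne a.minFac c.minFac with heq | hne
  · rw [← heq, ← sq, minPermDegree_prime_pow hp, if_neg two_ne_zero, sq]
    exact Nat.mul_le_mul_right _ hp.two_le
  · rw [minPermDegree_mul_of_coprime ((Nat.coprime_primes hp hq).mpr hne),
      minPermDegree_prime hp, minPermDegree_prime hq]
    omega

section PermOrders

variable {α : Type*} [Fintype α]

theorem minPermDegree_orderOf_le_card (w : Equiv.Perm α) :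
    minPermDegree (orderOf w) ≤ Fintype.card α := by
  classical
  rw [← w.lcm_cycleType]
  exact (minPermDegree_multiset_lcm_le_sum _).trans w.sum_cycleType_le

theorem exists_perm_orderOf_eq {a : ℕ} (ha : a ≠ 0) (h : minPermDegree a ≤ Fintype.card α) :
    ∃ w : Equiv.Perm α, orderOf w = a := by
  classical
  let m : Multiset ℕ := a.primeFactors.val.map fun p => p ^ a.factorization p
  have hsum : m.sum ≤ Fintype.card α := h
  have hm : ∀ k ∈ m, 2 ≤ k := by
    intro k hk
    obtain ⟨p, hp, rfl⟩ := Multiset.mem_map.mp hk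
    exact (Nat.prime_of_mem_primeFactors hp).two_le.trans
      (Nat.le_self_pow (Finsupp.mem_support_iff.mp hp) p)
  obtain ⟨w, hw⟩ := (Equiv.Perm.exists_with_cycleType_iff α).mpr ⟨hsum, hm⟩
  refine ⟨w, ?_⟩
  calc orderOf w
    _ = a.primeFactors.lcm fun p => p ^ a.factorization p := by rw [← w.lcm_cycleType, hw]; rfl
    _ = ∏ p ∈ a.primeFactors, p ^ a.factorization p :=
        lcm_eq_prod fun p hp q hq hpq => Nat.coprime_pow_primes _ _
          (Nat.prime_of_mem_primeFactors hp) (Nat.prime_of_mem_primeFactors hq) hpq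
    _ = a := Nat.prod_factorization_pow_eq_self ha

theorem minFac_orderOf_le_card {x : Equiv.Perm α} (hx : x ≠ 1) :
    (orderOf x).minFac ≤ Fintype.card α :=
  (minFac_le_minPermDegree (orderOf_pos x).ne' (mt orderOf_eq_one_iff.mp hx)).trans
    (minPermDegree_orderOf_le_card x)

end PermOrders

/-- Some element of `G` of order `a` commutes with some element of order `b`. This is adjacency in
the order-super-commuting graph of `G`, read on the orders of the vertices. -/
def OrdersCommute (G : Type*) [Group G] (a b : ℕ) : Prop :=
  ∃ u v : G, orderOf u = a ∧ orderOf v = b ∧ Commute u v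

namespace OrdersCommute

section Group

variable {G : Type*} [Group G] {a b c : ℕ}

theorem symm (h : OrdersCommute G a b) : OrdersCommute G b a := by
  obtain ⟨u, v, hu, hv, huv⟩ := h
  exact ⟨v, u, hv, hu, huv.symm⟩

theorem of_dvd_orderOf {w : G} (hw : orderOf w ≠ 0) (ha : a ∣ orderOf w) (hb : b ∣ orderOf w) :
    OrdersCommute G a b :=
  ⟨w ^ (orderOf w / a), w ^ (orderOf w / b), orderOf_pow_orderOf_div hw ha,
    orderOf_pow_orderOf_div hw hb, Commute.pow_pow_self w _ _⟩

theorem right_of_dvd (h : OrdersCommute G a b) (hb : b ≠ 0) (hc : c ∣ b) :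
    OrdersCommute G a c := by
  obtain ⟨u, v, hu, rfl, huv⟩ := h
  exact ⟨u, v ^ (orderOf v / c), hu, orderOf_pow_orderOf_div hb hc, huv.pow_right _⟩

theorem exists_orderOf_eq_mul (h : OrdersCommute G a b) (hab : a.Coprime b) :
    ∃ w : G, orderOf w = a * b := by
  obtain ⟨u, v, rfl, rfl, huv⟩ := h
  exact ⟨u * v, huv.orderOf_mul_eq_mul_orderOf_of_coprime hab⟩

theorem right_ne_zero [Finite G] (h : OrdersCommute G a b) : b ≠ 0 := by
  obtain ⟨u, v, -, rfl, -⟩ := h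
  exact (orderOf_pos v).ne'

theorem minFac_right [Finite G] {x : G} : OrdersCommute G (orderOf x) (orderOf x).minFac :=
  of_dvd_orderOf (orderOf_pos x).ne' dvd_rfl (Nat.minFac_dvd _)

end Group

section Perm

variable {α : Type*} [Fintype α] {a b p q : ℕ}

theorem minPermDegree_add_le_card (h : OrdersCommute (Equiv.Perm α) a b) (hab : a.Coprime b) :
    minPermDegree a + minPermDegree b ≤ Fintype.card α := by
  obtain ⟨w, hw⟩ := h.exists_orderOf_eq_mul hab
  rw [← minPermDegree_mul_of_coprime hab, ← hw]
  exact minPermDegree_orderOf_le_card w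

theorem dvd_or_minPermDegree_add_le_card (h : OrdersCommute (Equiv.Perm α) a q) (hq : q.Prime) :
    q ∣ a ∨ minPermDegree a + q ≤ Fintype.card α := by
  refine or_iff_not_imp_left.mpr fun hqa => ?_
  simpa only [minPermDegree_prime hq] using
    h.minPermDegree_add_le_card ((hq.coprime_iff_not_dvd.mpr hqa).symm)

theorem of_primes (hp : p.Prime) (hq : q.Prime) (hpq : p + q ≤ Fintype.card α) :
    OrdersCommute (Equiv.Perm α) p q := by
  rcases eq_or_ne p q with rfl | hne
  · obtain ⟨w, hw⟩ := exists_perm_orderOf_eq (α := α) hp.ne_zero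
      (by rw [minPermDegree_prime hp]; omega)
    exact ⟨w, w, hw, hw, Commute.refl w⟩
  · have hcop : p.Coprime q := (Nat.coprime_primes hp hq).mpr hne
    obtain ⟨w, hw⟩ := exists_perm_orderOf_eq (α := α) (mul_ne_zero hp.ne_zero hq.ne_zero)
      (by rwa [minPermDegree_mul_of_coprime hcop, minPermDegree_prime hp, minPermDegree_prime hq])
    exact of_dvd_orderOf (orderOf_pos w).ne' (hw ▸ dvd_mul_right p q) (hw ▸ dvd_mul_left q p)

theorem two_mul_minFac_le_card_or_two_right {x : Equiv.Perm α} (hx : x ≠ 1)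
    (hprime : ∀ p : ℕ, p.Prime → p ≤ Fintype.card α → p + 2 ≤ Fintype.card α) :
    2 * (orderOf x).minFac ≤ Fintype.card α ∨ OrdersCommute (Equiv.Perm α) (orderOf x) 2 := by
  by_cases hp : (orderOf x).Prime
  · have hle : orderOf x ≤ Fintype.card α := by
      simpa only [hp.minFac_eq] using minFac_orderOf_le_card hx
    exact Or.inr (of_primes hp Nat.prime_two (hprime _ hp hle))
  · exact Or.inl ((two_mul_minFac_le_minPermDegree (orderOf_pos x).ne'
      (mt orderOf_eq_one_iff.mp hx) hp).trans (minPermDegree_orderOf_le_card x))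

theorem exists_primes_between {x y : Equiv.Perm α} (hx : x ≠ 1) (hy : y ≠ 1)
    (hprime : ∀ p : ℕ, p.Prime → p ≤ Fintype.card α → p + 2 ≤ Fintype.card α) :
    ∃ p q : ℕ, p.Prime ∧ q.Prime ∧ OrdersCommute (Equiv.Perm α) (orderOf x) p ∧
      OrdersCommute (Equiv.Perm α) p q ∧ OrdersCommute (Equiv.Perm α) q (orderOf y) := by
  have hp := Nat.minFac_prime (mt orderOf_eq_one_iff.mp hx)
  have hq := Nat.minFac_prime (mt orderOf_eq_one_iff.mp hy)
  have hp2 := hprime _ hp (minFac_orderOf_le_card hx)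
  have hq2 := hprime _ hq (minFac_orderOf_le_card hy)
  rcases two_mul_minFac_le_card_or_two_right hx hprime with hxle | hx2
  · rcases two_mul_minFac_le_card_or_two_right hy hprime with hyle | hy2
    · exact ⟨_, _, hp, hq, minFac_right, of_primes hp hq (by omega), minFac_right.symm⟩
    · exact ⟨_, 2, hp, Nat.prime_two, minFac_right, of_primes hp Nat.prime_two hp2, hy2.symm⟩
  · exact ⟨2, _, Nat.prime_two, hq, hx2, of_primes Nat.prime_two hq (by omega), minFac_right.symm⟩

end Perm

end OrdersCommute

theorem sum_range_card_le_sum (s : Finset ℕ) : ∑ i ∈ range #s, i ≤ ∑ i ∈ s, i := by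
  induction s using Finset.induction_on_max with
  | empty => simp
  | insert a s hlt ih =>
    have ha : a ∉ s := fun h => (hlt a h).false
    have hcard : #s ≤ a := by
      simpa using card_le_card fun x hx => mem_range.mpr (hlt x hx)
    rw [card_insert_of_notMem ha, sum_range_succ, sum_insert ha]
    omega

theorem lcmUpto_le_pow_card_primesLE (n : ℕ) : n.lcmUpto ≤ n ^ #n.primesLE := by
  rcases eq_or_ne n 0 with rfl | hn
  · decide
  rw [Nat.lcmUpto_eq_prod_pow_log]
  exact prod_le_pow_card _ _ _ fun p _ => Nat.pow_log_le_self p hn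

theorem two_pow_le_pow_card_primesLE (n : ℕ) : 2 ^ n ≤ (n + 1) ^ (#n.primesLE + 1) :=
  calc 2 ^ n ≤ (n + 1) * n.lcmUpto := Chebyshev.two_pow_le_mul_lcmUpto n
    _ ≤ (n + 1) * (n + 1) ^ #n.primesLE := by
        gcongr
        exact (lcmUpto_le_pow_card_primesLE n).trans (Nat.pow_le_pow_left n.le_succ _)
    _ = (n + 1) ^ (#n.primesLE + 1) := (pow_succ' _ _).symm

theorem le_size_mul_card_primesBelow_succ (N : ℕ) : N ≤ N.size * (#N.primesBelow + 1) := by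
  rcases N with - | n
  · simp
  have hlt : 2 ^ n < 2 ^ ((n + 1).size * (#n.primesLE + 1)) :=
    calc 2 ^ n ≤ (n + 1) ^ (#n.primesLE + 1) := two_pow_le_pow_card_primesLE n
      _ < (2 ^ (n + 1).size) ^ (#n.primesLE + 1) :=
          Nat.pow_lt_pow_left (n + 1).lt_size_self (Nat.succ_ne_zero _)
      _ = 2 ^ ((n + 1).size * (#n.primesLE + 1)) := (pow_mul _ _ _).symm
  rw [Nat.primesBelow_eq_primesLE_sub_one, Nat.add_sub_cancel]
  exact (Nat.pow_lt_pow_iff_right Nat.one_lt_two).mp hlt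

theorem succ_mul_add_lt_two_pow {k : ℕ} (hk : 10 ≤ k) : (k + 1) * (6 * k + 19) < 2 ^ k := by
  induction k, hk using Nat.le_induction with
  | base => norm_num
  | succ k hk ih =>
    rw [pow_succ]
    nlinarith

/-- If the sum were smaller, there would be `O(√N)` primes below `N`, contradicting the Chebyshev
bound `N / log N`. -/
theorem three_mul_le_sum_primesBelow_of_large {N : ℕ} (hN : 1024 ≤ N) :
    3 * N ≤ ∑ p ∈ N.primesBelow, p := by
  by_contra! hlt
  obtain ⟨k, hk⟩ : ∃ k, N.size = k + 1 :=
    Nat.exists_eq_add_one.mpr (Nat.size_pos.mpr (by omega))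
  have hk10 : 10 ≤ k := Nat.lt_add_one_iff.mp (hk ▸ Nat.lt_size.mpr hN)
  have hkN : 2 ^ k ≤ N := Nat.lt_size.mp (by omega)
  have hNc : N ≤ (k + 1) * (#N.primesBelow + 1) := hk ▸ le_size_mul_card_primesBelow_succ N
  have hsum : #N.primesBelow * (#N.primesBelow - 1) < 6 * N := by
    rw [← sum_range_id_mul_two]
    linarith [sum_range_card_le_sum N.primesBelow]
  have hcard : #N.primesBelow ≤ 6 * k + 18 := by
    by_contra! hck
    obtain ⟨d, hd⟩ : ∃ d, #N.primesBelow = d + 1 := Nat.exists_eq_add_one.mpr (by omega)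
    rw [hd, Nat.add_sub_cancel] at hsum
    rw [hd] at hNc hck
    nlinarith
  refine hNc.not_gt ?_
  calc (k + 1) * (#N.primesBelow + 1)
    _ ≤ (k + 1) * (6 * k + 19) := Nat.mul_le_mul_left _ (Nat.add_le_add_right hcard 1)
    _ < 2 ^ k := succ_mul_add_lt_two_pow hk10
    _ ≤ N := hkN

theorem three_mul_le_sum_primesBelow {N : ℕ} (hN : 18 ≤ N) : 3 * N ≤ ∑ p ∈ N.primesBelow, p := by
  have hmono : ∀ M ≤ N, ∑ p ∈ M.primesBelow, p ≤ ∑ p ∈ N.primesBelow, p :=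
    fun M h => sum_le_sum_of_subset (Nat.primesBelow_mono h)
  have h18 : ∀ M < 104, 18 ≤ M → 3 * M ≤ ∑ p ∈ M.primesBelow, p := by decide +kernel
  have h104 : ∑ p ∈ Nat.primesBelow 104, p = 1264 := by decide +kernel
  have h200 : ∑ p ∈ Nat.primesBelow 200, p = 4227 := by decide +kernel
  rcases lt_or_ge N 104 with h | hN104
  · exact h18 N h hN
  rcases lt_or_ge N 200 with h | hN200
  · linarith [hmono 104 hN104]
  rcases lt_or_ge N 1024 with h | hN1024
  · linarith [hmono 200 hN200]
  exact three_mul_le_sum_primesBelow_of_large hN1024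

/-- For `m = k = n`, a sufficient condition on the orders `a`, `b` of two elements of the symmetric
group on `n` letters to be more than two steps apart: an element of order `a` leaves at most two
letters free, one of order `b` at most one. The letter counts `m` for `a` and `k` for `b` are kept
separate so that a pair can be enlarged one prime at a time. -/
structure IsFarPair (m k a b : ℕ) : Prop where
  coprime : a.Coprime b
  odd_right : Odd b
  left_le : minPermDegree a ≤ m
  le_left : m ≤ minPermDegree a + 2
  right_le : minPermDegree b ≤ k
  le_right : k ≤ minPermDegree b + 1

namespace IsFarPair

variable {m k a b p : ℕ}

theorem mul_left (h : IsFarPair m k a b) (hp : p.Prime) (hpa : p.Coprime a) (hpb : p.Coprime b) :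
    IsFarPair (m + p) k (p * a) b := by
  have hdeg : minPermDegree (p * a) = p + minPermDegree a := by
    rw [minPermDegree_mul_of_coprime hpa, minPermDegree_prime hp]
  exact ⟨hpb.mul_left h.coprime, h.odd_right, by linarith [h.left_le], by linarith [h.le_left],
    h.right_le, h.le_right⟩

theorem mul_right (h : IsFarPair m k a b) (hp : p.Prime) (hp₂ : Odd p) (hpa : p.Coprime a)
    (hpb : p.Coprime b) : IsFarPair m (k + p) a (p * b) := by
  have hdeg : minPermDegree (p * b) = p + minPermDegree b := by
    rw [minPermDegree_mul_of_coprime hpb, minPermDegree_prime hp]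
  exact ⟨hpa.symm.mul_right h.coprime, hp₂.mul h.odd_right, h.left_le, h.le_left,
    by linarith [h.right_le], by linarith [h.le_right]⟩

theorem not_ordersCommute_right {α : Type*} [Fintype α] {c : ℕ}
    (h : IsFarPair (Fintype.card α) (Fintype.card α) a b) (hc : c ≠ 1)
    (hac : OrdersCommute (Equiv.Perm α) a c) : ¬ OrdersCommute (Equiv.Perm α) b c := by
  intro hbc
  have hq := Nat.minFac_prime hc
  have hqb : c.minFac ∣ b := by
    refine ((hbc.right_of_dvd hbc.right_ne_zero c.minFac_dvd).dvd_or_minPermDegree_add_le_card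
      hq).resolve_right ?_
    linarith [h.le_right, hq.two_le]
  rcases (hac.right_of_dvd hac.right_ne_zero c.minFac_dvd).dvd_or_minPermDegree_add_le_card hq
    with hqa | hle
  · exact hq.one_lt.ne' (Nat.eq_one_of_dvd_coprimes h.coprime hqa hqb)
  · have hq₂ : c.minFac = 2 := le_antisymm (by linarith [h.le_left]) hq.two_le
    exact Nat.not_even_iff_odd.mpr h.odd_right (even_iff_two_dvd.mpr (hq₂ ▸ hqb))

end IsFarPair

/-- Every `m ≤ r` and `13 ≤ k ≤ 13 + s` admit a far pair whose prime factors are all below `N`.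
With the primes given to `b` in `hasFarPairs_twenty`, the degrees `minPermDegree b` come within `1`
of every `k` only from the offset `13` on. -/
def HasFarPairs (N r s : ℕ) : Prop :=
  ∀ m ≤ r, ∀ k, 13 ≤ k → k ≤ 13 + s →
    ∃ a ∈ N.smoothNumbers, ∃ b ∈ N.smoothNumbers, IsFarPair m k a b

namespace HasFarPairs

variable {N r s : ℕ}

theorem mono {M : ℕ} (h : HasFarPairs N r s) (hNM : N ≤ M) : HasFarPairs M r s := by
  intro m hm k hk hks
  obtain ⟨a, ha, b, hb, hab⟩ := h m hm k hk hks
  exact ⟨a, Nat.smoothNumbers_mono hNM ha, b, Nat.smoothNumbers_mono hNM hb, hab⟩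

theorem extend_left (h : HasFarPairs N r s) (hN : N.Prime) (hr : N ≤ r + 1) :
    HasFarPairs (N + 1) (r + N) s := by
  intro m hm k hk hks
  rcases le_or_gt m r with hmr | hrm
  · exact h.mono N.le_succ m hmr k hk hks
  obtain ⟨m, rfl⟩ : ∃ m', m = m' + N := Nat.exists_eq_add_of_le' (by omega)
  obtain ⟨a, ha, b, hb, hab⟩ := h m (by omega) k hk hks
  exact ⟨N * a, Nat.mul_mem_smoothNumbers (Nat.mem_smoothNumbers_of_lt hN.pos N.lt_succ_self)
      (Nat.smoothNumbers_mono N.le_succ ha), b, Nat.smoothNumbers_mono N.le_succ hb,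
    hab.mul_left hN (hN.smoothNumbers_coprime ha) (hN.smoothNumbers_coprime hb)⟩

theorem extend_right (h : HasFarPairs N r s) (hN : N.Prime) (hN₂ : Odd N) (hs : N ≤ s + 1) :
    HasFarPairs (N + 1) r (s + N) := by
  intro m hm k hk hks
  rcases le_or_gt k (13 + s) with hk' | hk'
  · exact h.mono N.le_succ m hm k hk hk'
  obtain ⟨k, rfl⟩ : ∃ k', k = k' + N := Nat.exists_eq_add_of_le' (by omega)
  obtain ⟨a, ha, b, hb, hab⟩ := h m hm k (by omega) (by omega)
  exact ⟨a, Nat.smoothNumbers_mono N.le_succ ha, N * b,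
    Nat.mul_mem_smoothNumbers (Nat.mem_smoothNumbers_of_lt hN.pos N.lt_succ_self)
      (Nat.smoothNumbers_mono N.le_succ hb),
    hab.mul_right hN hN₂ (hN.smoothNumbers_coprime ha) (hN.smoothNumbers_coprime hb)⟩

end HasFarPairs

/-- The primes below `20` and their exponents are distributed by search, so that the ranges reach
`29 + 48 = 77`, the sum of these primes. -/
theorem hasFarPairs_twenty : HasFarPairs 20 29 48 := by
  intro m hm k hk hks
  have hleft : ∀ m ≤ 29, ∃ a ∈ Nat.divisors (2 ^ 4 * 7 * 11),
      minPermDegree a ≤ m ∧ m ≤ minPermDegree a + 2 := by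
    decide +kernel
  have hright : ∀ k ≤ 61, 13 ≤ k →
      ∃ b₁ ∈ Nat.divisors (3 ^ 3 * 5 ^ 2), ∃ b₂ ∈ Nat.divisors (13 * 17 * 19),
        minPermDegree b₁ + minPermDegree b₂ ≤ k ∧
          k ≤ minPermDegree b₁ + minPermDegree b₂ + 1 := by
    decide +kernel
  obtain ⟨a, ha, ham, hma⟩ := hleft m hm
  obtain ⟨b₁, hb₁, b₂, hb₂, hbk, hkb⟩ := hright k hks hk
  have ha := Nat.dvd_of_mem_divisors ha
  have hb₁ := Nat.dvd_of_mem_divisors hb₁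
  have hb₂ := Nat.dvd_of_mem_divisors hb₂
  have hb := mul_dvd_mul hb₁ hb₂
  have hdeg := minPermDegree_mul_of_coprime (Nat.Coprime.of_dvd hb₁ hb₂ (by norm_num))
  refine ⟨a, Nat.mem_smoothNumbers_of_dvd ?_ ha, b₁ * b₂, Nat.mem_smoothNumbers_of_dvd ?_ hb, ?_⟩
  · exact Nat.mem_smoothNumbers.mpr ⟨by norm_num, by decide +kernel⟩
  · exact Nat.mem_smoothNumbers.mpr ⟨by norm_num, by decide +kernel⟩
  · exact ⟨Nat.Coprime.of_dvd ha hb (by norm_num), Odd.of_dvd_nat (by decide) hb, ham, hma,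
      by rwa [hdeg], by rwa [hdeg]⟩

/-- The next prime `N` enlarges the shorter of the two ranges, which keeps them balanced. -/
theorem exists_balanced_hasFarPairs {N : ℕ} (hN : 20 ≤ N) :
    ∃ r s, HasFarPairs N r s ∧ ∑ p ∈ N.primesBelow, p ≤ r + s ∧ r ≤ s + N ∧ s ≤ r + N := by
  induction N, hN using Nat.le_induction with
  | base => exact ⟨29, 48, hasFarPairs_twenty, by decide +kernel, by norm_num, by norm_num⟩
  | succ N hN ih =>
    obtain ⟨r, s, h, hsum, hrs, hsr⟩ := ih
    rw [Nat.primesBelow_succ]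
    split_ifs with hp
    · rw [sum_insert (Nat.notMem_primesBelow N)]
      have h3 := three_mul_le_sum_primesBelow (by omega : 18 ≤ N)
      rcases le_total r s with hle | hle
      · exact ⟨r + N, s, h.extend_left hp (by omega), by omega, by omega, by omega⟩
      · exact ⟨r, s + N, h.extend_right hp (hp.odd_of_ne_two (by omega)) (by omega),
          by omega, by omega, by omega⟩
    · exact ⟨r, s, h.mono N.le_succ, hsum, by omega, by omega⟩

theorem exists_isFarPair_of_thirteen_le {n : ℕ} (hn : 13 ≤ n) : ∃ a b, IsFarPair n n a b := by
  obtain ⟨r, s, h, hsum, hrs, hsr⟩ := exists_balanced_hasFarPairs (N := n + 20) (by omega)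
  have h3 := three_mul_le_sum_primesBelow (by omega : 18 ≤ n + 20)
  obtain ⟨a, -, b, -, hab⟩ := h n (by omega) n hn (by omega)
  exact ⟨a, b, hab⟩

theorem exists_isFarPair_of_not_prime {n : ℕ} (hn : 4 ≤ n) (h₁ : ¬ n.Prime)
    (h₂ : ¬ (n - 1).Prime) : ∃ a b, IsFarPair n n a b := by
  rcases le_or_gt 13 n with h13 | h13
  · exact exists_isFarPair_of_thirteen_le h13
  have h910 : n = 9 ∨ n = 10 := by
    interval_cases n <;> revert h₁ h₂ <;> decide
  rcases h910 with rfl | rfl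
  · exact ⟨8, 9, by constructor <;> decide +kernel⟩
  · exact ⟨20, 21, by constructor <;> decide +kernel⟩

theorem add_two_le_of_prime_of_le {n p : ℕ} (h₁ : ¬ n.Prime) (h₂ : ¬ (n - 1).Prime)
    (hp : p.Prime) (hpn : p ≤ n) : p + 2 ≤ n := by
  have hne : p ≠ n := fun h => h₁ (h ▸ hp)
  have hne' : p ≠ n - 1 := fun h => h₂ (h ▸ hp)
  omega

namespace reducedOrderSuperCommutingGraph

variable {n : ℕ}

theorem edist_le_one {x y : {x : Equiv.Perm (Fin n) // x ≠ 1}}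
    (h : OrdersCommute (Equiv.Perm (Fin n)) (orderOf x.1) (orderOf y.1)) :
    (reducedOrderSuperCommutingGraph n).edist x y ≤ 1 := by
  rw [SimpleGraph.edist_le_one_iff_adj_or_eq]
  exact (em (x = y)).symm.imp_left fun hne => ⟨hne, h⟩

theorem edist_le_three (h₁ : ¬ n.Prime) (h₂ : ¬ (n - 1).Prime)
    (x y : {x : Equiv.Perm (Fin n) // x ≠ 1}) :
    (reducedOrderSuperCommutingGraph n).edist x y ≤ 3 := by
  obtain ⟨p, q, hp, hq, hxp, hpq, hqy⟩ := OrdersCommute.exists_primes_between x.2 y.2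
    fun p hp hpn => by
      rw [Fintype.card_fin] at hpn ⊢
      exact add_two_le_of_prime_of_le h₁ h₂ hp hpn
  obtain ⟨u, v, rfl, rfl, huv⟩ := hpq
  let u' : {x : Equiv.Perm (Fin n) // x ≠ 1} := ⟨u, mt orderOf_eq_one_iff.mpr hp.ne_one⟩
  let v' : {x : Equiv.Perm (Fin n) // x ≠ 1} := ⟨v, mt orderOf_eq_one_iff.mpr hq.ne_one⟩
  calc (reducedOrderSuperCommutingGraph n).edist x y
    _ ≤ (reducedOrderSuperCommutingGraph n).edist x u' +
          ((reducedOrderSuperCommutingGraph n).edist u' v' +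
            (reducedOrderSuperCommutingGraph n).edist v' y) :=
        SimpleGraph.edist_triangle.trans (add_le_add_right SimpleGraph.edist_triangle _)
    _ ≤ 1 + (1 + 1) :=
        add_le_add (edist_le_one hxp)
          (add_le_add (edist_le_one ⟨u, v, rfl, rfl, huv⟩) (edist_le_one hqy))
    _ = 3 := by norm_num

theorem exists_orderOf_eq {a : ℕ} (hpos : 0 < minPermDegree a) (hle : minPermDegree a ≤ n) :
    ∃ x : {x : Equiv.Perm (Fin n) // x ≠ 1}, orderOf x.1 = a := by
  have ha₀ : a ≠ 0 := by rintro rfl; exact hpos.ne' minPermDegree_zero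
  have ha₁ : a ≠ 1 := by rintro rfl; exact hpos.ne' minPermDegree_one
  obtain ⟨w, rfl⟩ := exists_perm_orderOf_eq (α := Fin n) ha₀ (by rwa [Fintype.card_fin])
  exact ⟨⟨w, mt orderOf_eq_one_iff.mpr ha₁⟩, rfl⟩

theorem two_lt_edist {x y : {x : Equiv.Perm (Fin n) // x ≠ 1}}
    (h : IsFarPair n n (orderOf x.1) (orderOf y.1)) :
    2 < (reducedOrderSuperCommutingGraph n).edist x y := by
  have hfar {c : ℕ} (hc : c ≠ 1) (hxc : OrdersCommute (Equiv.Perm (Fin n)) (orderOf x.1) c) :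
      ¬ OrdersCommute (Equiv.Perm (Fin n)) (orderOf y.1) c :=
    IsFarPair.not_ordersCommute_right (by rwa [Fintype.card_fin]) hc hxc
  have hne (z : {x : Equiv.Perm (Fin n) // x ≠ 1}) : orderOf z.1 ≠ 1 :=
    mt orderOf_eq_one_iff.mp z.2
  have hy : OrdersCommute (Equiv.Perm (Fin n)) (orderOf y.1) (orderOf y.1) :=
    ⟨y, y, rfl, rfl, Commute.refl _⟩
  refine SimpleGraph.two_lt_edist_iff.mpr ⟨?_, fun hadj => hfar (hne y) hadj.2 hy, ?_⟩
  · rintro rfl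
    exact hfar (hne x) hy hy
  · exact Set.eq_empty_of_forall_notMem fun z hz => hfar (hne z) hz.1.2 hz.2.2

theorem exists_two_lt_edist (hn : 4 ≤ n) (h₁ : ¬ n.Prime) (h₂ : ¬ (n - 1).Prime) :
    ∃ x y, 2 < (reducedOrderSuperCommutingGraph n).edist x y := by
  obtain ⟨a, b, hab⟩ := exists_isFarPair_of_not_prime hn h₁ h₂
  have ha := hab.le_left
  have hb := hab.le_right
  obtain ⟨x, rfl⟩ := exists_orderOf_eq (by omega) hab.left_le
  obtain ⟨y, rfl⟩ := exists_orderOf_eq (by omega) hab.right_le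
  exact ⟨x, y, two_lt_edist hab⟩

end reducedOrderSuperCommutingGraph

/-- **Corollary 2.**  If `n ≥ 4` and neither `n` nor `n - 1` is prime, then the reduced
order-super-commuting graph `Δᵒ(Sₙ)*` is connected of diameter exactly `3`. -/
theorem stmt11 (n : ℕ) (hn : 4 ≤ n) (h₁ : ¬ n.Prime) (h₂ : ¬ (n - 1).Prime) :
    (reducedOrderSuperCommutingGraph n).Connected ∧
      (reducedOrderSuperCommutingGraph n).diam = 3 := by
  obtain ⟨x, y, hxy⟩ := reducedOrderSuperCommutingGraph.exists_two_lt_edist hn h₁ h₂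
  have hediam : (reducedOrderSuperCommutingGraph n).ediam = 3 := by
    refine le_antisymm (SimpleGraph.ediam_le_of_edist_le
      (reducedOrderSuperCommutingGraph.edist_le_three h₁ h₂)) ?_
    exact (Order.add_one_le_of_lt hxy).trans SimpleGraph.edist_le_ediam
  have : Nonempty {x : Equiv.Perm (Fin n) // x ≠ 1} := ⟨x⟩
  refine ⟨SimpleGraph.connected_of_ediam_ne_top (by simp [hediam]), ?_⟩
  rw [SimpleGraph.diam, hediam]
  rfl
end

section
/- Let n ≥ 4 be an integer such that neither n nor n−1 is a prime number. Then the reduced order-super-commuting graph Δᵒ(Sₙ)* has diameter 3 if and only if there exist nonempty disjoint sets T₁, T₂ of primes, all at most n, and positive integer exponents α_p (p ∈ T₁) and β_q (q ∈ T₂), such that M₁ := Σ_{p ∈ T₁} p^{α_p} ∈ {n−1, n}, M₂ := Σ_{q ∈ T₂} q^{β_q} ≤ n, and p + M₂ > n for every p ∈ T₁. -/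
/-!
`Sₙ` contains an element of order `m` exactly when `s(m) ≤ n`, where `s(m)` is the sum of the prime
powers exactly dividing `m`: disjoint cycles of these lengths are the cheapest way to realise the
order `m`. Two commuting elements of orders `a` and `b` generate an element of order `lcm a b`, and
conversely such an element has powers of orders `a` and `b`, so adjacency of `x` and `y` means
`s(lcm |x| |y|) ≤ n`. Replacing a midpoint by a power of prime order, `x` and `y` are within
distance two iff for some prime `r`, `r ∣ |x|` or `s(|x|) + r ≤ n`, and likewise for `y`.
If `s(|x|)` and `s(|y|)` are both at most `n - 2`, then `r = 2` works; if `s(|x|) ≥ n - 1`, only the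
prime divisors of `|x|` are candidates, and their failure is the condition on `T₁` and `T₂`, the
sets of primes dividing `|x|` and `|y|`.

When neither `n` nor `n - 1` is prime, every vertex is equal or adjacent to one of prime order at
most `n / 2`, and any two of the latter are equal or adjacent, which bounds the diameter by three.
-/

/-- The sum `∑ p ^ vₚ(m)` of the prime powers exactly dividing `m`, which for `m ≠ 0` is the least
degree of a symmetric group with an element of order `m`. Both `0` and `1` have sum `0`. -/
def primePowerSum (m : ℕ) : ℕ := ∑ p ∈ m.primeFactors, p ^ m.factorization p

section PrimePowerSum

variable {a b p r : ℕ}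

lemma primePowerSum_mul (h : a.Coprime b) :
    primePowerSum (a * b) = primePowerSum a + primePowerSum b := by
  unfold primePowerSum
  rw [h.primeFactors_mul, Finset.sum_union h.disjoint_primeFactors]
  congr 1 <;> refine Finset.sum_congr rfl fun p hp ↦ ?_
  · rw [Nat.factorization_eq_of_coprime_left h (Nat.mem_primeFactors_iff_mem_primeFactorsList.1 hp)]
  · rw [Nat.factorization_eq_of_coprime_right h
      (Nat.mem_primeFactors_iff_mem_primeFactorsList.1 hp)]

lemma primePowerSum_prime_pow {k : ℕ} (hp : p.Prime) (hk : k ≠ 0) :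
    primePowerSum (p ^ k) = p ^ k := by
  simp [primePowerSum, Nat.primeFactors_prime_pow hk hp, hp.factorization]

lemma primePowerSum_prime (hp : p.Prime) : primePowerSum p = p := by
  simpa using primePowerSum_prime_pow hp one_ne_zero

lemma primePowerSum_le_of_dvd (hb : b ≠ 0) (h : a ∣ b) : primePowerSum a ≤ primePowerSum b := by
  have ha : a ≠ 0 := ne_zero_of_dvd_ne_zero hb h
  calc primePowerSum a
      ≤ ∑ p ∈ a.primeFactors, p ^ b.factorization p :=
        Finset.sum_le_sum fun p hp ↦ Nat.pow_le_pow_right (Nat.prime_of_mem_primeFactors hp).pos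
          ((Nat.factorization_le_iff_dvd ha hb).2 h p)
    _ ≤ primePowerSum b := Finset.sum_le_sum_of_subset (Nat.primeFactors_mono h hb)

lemma primePowerSum_le_self (a : ℕ) : primePowerSum a ≤ a := by
  induction a using Nat.recOnPosPrimePosCoprime with
  | prime_pow p k hp hk => exact (primePowerSum_prime_pow hp hk.ne').le
  | zero => simp [primePowerSum]
  | one => simp [primePowerSum]
  | coprime a b ha hb h iha ihb => rw [primePowerSum_mul h]; nlinarith

lemma primePowerSum_lcm_le (a b : ℕ) :
    primePowerSum (a.lcm b) ≤ primePowerSum a + primePowerSum b := by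
  rcases eq_or_ne a 0 with rfl | ha
  · simp [primePowerSum]
  rcases eq_or_ne b 0 with rfl | hb
  · simp [primePowerSum]
  rw [← Nat.factorizationLCMLeft_mul_factorizationLCMRight ha hb,
    primePowerSum_mul (Nat.coprime_factorizationLCMLeft_factorizationLCMRight a b)]
  exact add_le_add (primePowerSum_le_of_dvd ha (Nat.factorizationLCMLeft_dvd_left a b))
    (primePowerSum_le_of_dvd hb (Nat.factorizationLCMRight_dvd_right a b))

lemma le_of_mem_primeFactors_of_primePowerSum_le {n : ℕ} (hp : p ∈ a.primeFactors)
    (ha : primePowerSum a ≤ n) : p ≤ n := by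
  obtain ⟨hp, hpa, ha₀⟩ := Nat.mem_primeFactors.1 hp
  exact (primePowerSum_prime hp).ge.trans ((primePowerSum_le_of_dvd ha₀ hpa).trans ha)

lemma primePowerSum_multiset_lcm_le_sum (s : Multiset ℕ) : primePowerSum s.lcm ≤ s.sum := by
  induction s using Multiset.induction with
  | empty => simp [primePowerSum]
  | cons a s ih =>
    rw [Multiset.lcm_cons, Multiset.sum_cons]
    exact (primePowerSum_lcm_le a s.lcm).trans (add_le_add (primePowerSum_le_self a) ih)

lemma primePowerSum_lcm_prime_le_iff {n : ℕ} (hr : r.Prime) (ha : primePowerSum a ≤ n) :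
    primePowerSum (a.lcm r) ≤ n ↔ r ∣ a ∨ primePowerSum a + r ≤ n := by
  by_cases hra : r ∣ a
  · simp [Nat.lcm_eq_left hra, hra, ha]
  · have hcop : a.Coprime r := (hr.coprime_iff_not_dvd.2 hra).symm
    rw [hcop.lcm_eq_mul, primePowerSum_mul hcop, primePowerSum_prime hr, or_iff_right hra]

lemma two_mul_minFac_le_primePowerSum (ha : 1 < a) (hap : ¬ a.Prime) :
    2 * a.minFac ≤ primePowerSum a := by
  have hp : a.minFac.Prime := Nat.minFac_prime ha.ne'
  obtain ⟨c, hc⟩ := a.minFac_dvd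
  have hc₁ : c ≠ 1 := by
    rintro rfl
    exact hap (by rwa [hc, mul_one])
  obtain ⟨q, hq, hqc⟩ := Nat.exists_prime_and_dvd hc₁
  have hpq_dvd : a.minFac * q ∣ a := (mul_dvd_mul_left _ hqc).trans hc.symm.dvd
  have hpq : a.minFac ≤ q := Nat.minFac_le_of_dvd hq.two_le (dvd_of_mul_left_dvd hpq_dvd)
  refine le_trans ?_ (primePowerSum_le_of_dvd (by lia) hpq_dvd)
  rcases hpq.eq_or_lt with rfl | hlt
  · rw [← sq, primePowerSum_prime_pow hp two_ne_zero, sq]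
    exact Nat.mul_le_mul_right _ hp.two_le
  · rw [primePowerSum_mul ((Nat.coprime_primes hp hq).2 hlt.ne), primePowerSum_prime hp,
      primePowerSum_prime hq]
    lia

end PrimePowerSum

section PrimePowerProduct

variable {T : Finset ℕ} {α : ℕ → ℕ}

lemma factorization_prod_prime_pow (hT : ∀ p ∈ T, p.Prime) :
    (∏ p ∈ T, p ^ α p).factorization = Finsupp.indicator T fun p _ ↦ α p := by
  rw [Nat.factorization_prod fun p hp ↦ pow_ne_zero _ (hT p hp).ne_zero,
    Finsupp.indicator_eq_sum_single]
  exact Finset.sum_congr rfl fun p hp ↦ (hT p hp).factorization_pow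

lemma primeFactors_prod_prime_pow (hT : ∀ p ∈ T, p.Prime) (hα : ∀ p ∈ T, 0 < α p) :
    (∏ p ∈ T, p ^ α p).primeFactors = T := by
  ext p
  rw [← Nat.support_factorization, factorization_prod_prime_pow hT, Finsupp.mem_support_iff,
    Finsupp.indicator_apply]
  by_cases hp : p ∈ T
  · simp [hp, (hα p hp).ne']
  · simp [hp]

lemma primePowerSum_prod_prime_pow (hT : ∀ p ∈ T, p.Prime) (hα : ∀ p ∈ T, 0 < α p) :
    primePowerSum (∏ p ∈ T, p ^ α p) = ∑ p ∈ T, p ^ α p := by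
  rw [primePowerSum, primeFactors_prod_prime_pow hT hα, factorization_prod_prime_pow hT]
  exact Finset.sum_congr rfl fun p hp ↦ by rw [Finsupp.indicator_of_mem hp]

end PrimePowerProduct

lemma exists_commute_orderOf_eq_iff {G : Type*} [Monoid G] {a b : ℕ} (ha : a ≠ 0) (hb : b ≠ 0) :
    (∃ u v : G, orderOf u = a ∧ orderOf v = b ∧ Commute u v) ↔
      ∃ w : G, orderOf w = a.lcm b := by
  constructor
  · rintro ⟨u, v, rfl, rfl, huv⟩
    obtain ⟨w, -, hw⟩ := huv.exists_orderOf_eq_lcm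
    exact ⟨w, hw⟩
  · rintro ⟨w, hw⟩
    have hw₀ : orderOf w ≠ 0 := hw ▸ Nat.lcm_ne_zero ha hb
    exact ⟨w ^ (orderOf w / a), w ^ (orderOf w / b),
      orderOf_pow_orderOf_div hw₀ (hw ▸ Nat.dvd_lcm_left a b),
      orderOf_pow_orderOf_div hw₀ (hw ▸ Nat.dvd_lcm_right a b), (Commute.refl w).pow_pow _ _⟩

section Perm

variable {ι : Type*} [Fintype ι]

lemma primePowerSum_orderOf_le_card (g : Equiv.Perm ι) :
    primePowerSum (orderOf g) ≤ Fintype.card ι := by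
  classical
  rw [← Equiv.Perm.lcm_cycleType]
  exact (primePowerSum_multiset_lcm_le_sum _).trans g.sum_cycleType_le

lemma exists_perm_orderOf_eq_s12 {m : ℕ} (hm : m ≠ 0) (h : primePowerSum m ≤ Fintype.card ι) :
    ∃ g : Equiv.Perm ι, orderOf g = m := by
  classical
  let lengths : Multiset ℕ := m.primeFactors.val.map fun p ↦ p ^ m.factorization p
  have two_le_of_mem : ∀ k ∈ lengths, 2 ≤ k := by
    intro k hk
    obtain ⟨p, hp, rfl⟩ := Multiset.mem_map.1 hk
    have hpm : p ∈ m.primeFactors := hp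
    exact (Nat.prime_of_mem_primeFactors hpm).two_le.trans
      (Nat.le_self_pow (Finsupp.mem_support_iff.1 hpm) p)
  have pairwise_coprime : (m.primeFactors : Set ℕ).Pairwise
      (Nat.Coprime.onFun fun p ↦ p ^ m.factorization p) := fun p hp q hq hpq ↦
    Nat.coprime_pow_primes _ _ (Nat.prime_of_mem_primeFactors hp)
      (Nat.prime_of_mem_primeFactors hq) hpq
  obtain ⟨g, hg⟩ := (Equiv.Perm.exists_with_cycleType_iff ι (m := lengths)).2 ⟨h, two_le_of_mem⟩
  refine ⟨g, ?_⟩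
  calc orderOf g = m.primeFactors.lcm fun p ↦ p ^ m.factorization p := by
        rw [← Equiv.Perm.lcm_cycleType, hg]; rfl
    _ = ∏ p ∈ m.primeFactors, p ^ m.factorization p := Finset.lcm_eq_prod pairwise_coprime
    _ = m := Nat.prod_factorization_pow_eq_self hm

lemma exists_perm_orderOf_eq_iff {m : ℕ} (hm : m ≠ 0) :
    (∃ g : Equiv.Perm ι, orderOf g = m) ↔ primePowerSum m ≤ Fintype.card ι :=
  ⟨fun ⟨g, hg⟩ ↦ hg ▸ primePowerSum_orderOf_le_card g, exists_perm_orderOf_eq_s12 hm⟩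

end Perm

section Graph

variable {V : Type*} {G : SimpleGraph V}

lemma edist_le_two_iff_exists_edist_le_one {u v : V} :
    G.edist u v ≤ 2 ↔ ∃ w, G.edist u w ≤ 1 ∧ G.edist w v ≤ 1 := by
  constructor
  · intro h
    rw [← not_lt, SimpleGraph.two_lt_edist_iff] at h
    by_cases huv : G.edist u v ≤ 1
    · exact ⟨v, huv, by simp⟩
    rw [SimpleGraph.edist_le_one_iff_adj_or_eq, not_or] at huv
    have hcommon : (G.commonNeighbors u v).Nonempty :=
      Set.nonempty_iff_ne_empty.2 fun hempty ↦ h ⟨huv.2, huv.1, hempty⟩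
    obtain ⟨w, huw, hvw⟩ := hcommon
    exact ⟨w, SimpleGraph.edist_le_one_iff_adj_or_eq.2 (.inl huw),
      SimpleGraph.edist_le_one_iff_adj_or_eq.2 (.inl hvw.symm)⟩
  · rintro ⟨w, huw, hwv⟩
    calc G.edist u v ≤ G.edist u w + G.edist w v := SimpleGraph.edist_triangle
      _ ≤ 1 + 1 := add_le_add huw hwv
      _ = 2 := one_add_one_eq_two

lemma diam_eq_succ_iff_exists_lt_edist {k : ℕ} (h : ∀ u v, G.edist u v ≤ (k + 1 : ℕ)) :
    G.diam = k + 1 ↔ ∃ u v, k < G.edist u v := by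
  have hle : G.ediam ≤ (k + 1 : ℕ) := SimpleGraph.ediam_le_of_edist_le h
  have hcast : (G.diam : ℕ∞) = G.ediam :=
    ENat.natCast_toNat (hle.trans_lt (ENat.natCast_lt_top _)).ne
  have hlt : k < G.diam ↔ ∃ u v, k < G.edist u v := by
    rw [← Nat.cast_lt (α := ℕ∞), hcast, ← not_le, SimpleGraph.ediam_le_iff]
    push Not
    rfl
  rw [← hcast, Nat.cast_le] at hle
  rw [← hlt]
  lia

end Graph

section ReducedOrderSuperCommutingGraph

variable {n : ℕ}

lemma one_lt_orderOf_vertex (x : {x : Equiv.Perm (Fin n) // x ≠ 1}) : 1 < orderOf x.1 := by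
  have hx₁ : orderOf x.1 ≠ 1 := mt orderOf_eq_one_iff.1 x.2
  have := orderOf_pos x.1
  lia

lemma primePowerSum_orderOf_vertex_le (x : {x : Equiv.Perm (Fin n) // x ≠ 1}) :
    primePowerSum (orderOf x.1) ≤ n := by
  simpa using primePowerSum_orderOf_le_card x.1

lemma exists_vertex_orderOf_eq {m : ℕ} (hm : 1 < m) (h : primePowerSum m ≤ n) :
    ∃ x : {x : Equiv.Perm (Fin n) // x ≠ 1}, orderOf x.1 = m := by
  obtain ⟨g, rfl⟩ := exists_perm_orderOf_eq_s12 (ι := Fin n) (zero_lt_one.trans hm).ne' (by simpa)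
  exact ⟨⟨g, fun hg ↦ hm.ne' (orderOf_eq_one_iff.2 hg)⟩, rfl⟩

lemma edist_le_one_iff_primePowerSum_lcm_le (x y : {x : Equiv.Perm (Fin n) // x ≠ 1}) :
    (reducedOrderSuperCommutingGraph n).edist x y ≤ 1 ↔
      primePowerSum ((orderOf x.1).lcm (orderOf y.1)) ≤ n := by
  have hx := (orderOf_pos x.1).ne'
  have hy := (orderOf_pos y.1).ne'
  have hadj : (reducedOrderSuperCommutingGraph n).Adj x y ↔
      x ≠ y ∧ primePowerSum ((orderOf x.1).lcm (orderOf y.1)) ≤ n := by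
    refine and_congr_right' ?_
    rw [exists_commute_orderOf_eq_iff hx hy, exists_perm_orderOf_eq_iff (Nat.lcm_ne_zero hx hy),
      Fintype.card_fin]
  rw [SimpleGraph.edist_le_one_iff_adj_or_eq, hadj]
  rcases eq_or_ne x y with rfl | hxy
  · simpa using primePowerSum_orderOf_vertex_le x
  · simp [hxy]

lemma edist_le_one_iff_of_prime_orderOf {x z : {x : Equiv.Perm (Fin n) // x ≠ 1}}
    (hz : (orderOf z.1).Prime) :
    (reducedOrderSuperCommutingGraph n).edist x z ≤ 1 ↔
      orderOf z.1 ∣ orderOf x.1 ∨ primePowerSum (orderOf x.1) + orderOf z.1 ≤ n := by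
  rw [edist_le_one_iff_primePowerSum_lcm_le,
    primePowerSum_lcm_prime_le_iff hz (primePowerSum_orderOf_vertex_le x)]

lemma exists_vertex_orderOf_eq_prime_edist_le_one {x : {x : Equiv.Perm (Fin n) // x ≠ 1}} {r : ℕ}
    (hr : r.Prime) (h : r ∣ orderOf x.1 ∨ primePowerSum (orderOf x.1) + r ≤ n) :
    ∃ z : {x : Equiv.Perm (Fin n) // x ≠ 1},
      orderOf z.1 = r ∧ (reducedOrderSuperCommutingGraph n).edist x z ≤ 1 := by
  have hrn : primePowerSum r ≤ n := by
    rcases h with hdvd | hle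
    · exact (primePowerSum_le_of_dvd (orderOf_pos x.1).ne' hdvd).trans
        (primePowerSum_orderOf_vertex_le x)
    · rw [primePowerSum_prime hr]
      lia
  obtain ⟨z, rfl⟩ := exists_vertex_orderOf_eq hr.one_lt hrn
  exact ⟨z, rfl, (edist_le_one_iff_of_prime_orderOf hr).2 h⟩

lemma edist_le_two_iff_exists_prime (x y : {x : Equiv.Perm (Fin n) // x ≠ 1}) :
    (reducedOrderSuperCommutingGraph n).edist x y ≤ 2 ↔
      ∃ r : ℕ, r.Prime ∧ (r ∣ orderOf x.1 ∨ primePowerSum (orderOf x.1) + r ≤ n) ∧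
        (r ∣ orderOf y.1 ∨ primePowerSum (orderOf y.1) + r ≤ n) := by
  rw [edist_le_two_iff_exists_edist_le_one]
  constructor
  · rintro ⟨z, hxz, hzy⟩
    have hr : (orderOf z.1).minFac.Prime := Nat.minFac_prime (one_lt_orderOf_vertex z).ne'
    have dvd_or_add_le (w : {x : Equiv.Perm (Fin n) // x ≠ 1})
        (hwz : (reducedOrderSuperCommutingGraph n).edist w z ≤ 1) :
        (orderOf z.1).minFac ∣ orderOf w.1 ∨
          primePowerSum (orderOf w.1) + (orderOf z.1).minFac ≤ n := by
      rw [edist_le_one_iff_primePowerSum_lcm_le] at hwz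
      rw [← primePowerSum_lcm_prime_le_iff hr (primePowerSum_orderOf_vertex_le w)]
      exact (primePowerSum_le_of_dvd (Nat.lcm_ne_zero (orderOf_pos w.1).ne' (orderOf_pos z.1).ne')
        (Nat.lcm_dvd_lcm_of_dvd_right _ (Nat.minFac_dvd _))).trans hwz
    exact ⟨_, hr, dvd_or_add_le x hxz, dvd_or_add_le y (SimpleGraph.edist_comm ▸ hzy)⟩
  · rintro ⟨r, hr, hx, hy⟩
    obtain ⟨z, rfl, hxz⟩ := exists_vertex_orderOf_eq_prime_edist_le_one hr hx
    exact ⟨z, hxz, SimpleGraph.edist_comm ▸ (edist_le_one_iff_of_prime_orderOf hr).2 hy⟩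

lemma exists_vertex_prime_orderOf_le_half (hn : 4 ≤ n) (h₁ : ¬ n.Prime) (h₂ : ¬ (n - 1).Prime)
    (x : {x : Equiv.Perm (Fin n) // x ≠ 1}) :
    ∃ z : {x : Equiv.Perm (Fin n) // x ≠ 1}, (orderOf z.1).Prime ∧ 2 * orderOf z.1 ≤ n ∧
      (reducedOrderSuperCommutingGraph n).edist x z ≤ 1 := by
  have hxn := primePowerSum_orderOf_vertex_le x
  have hx₁ := one_lt_orderOf_vertex x
  suffices ∃ r : ℕ, r.Prime ∧ 2 * r ≤ n ∧
      (r ∣ orderOf x.1 ∨ primePowerSum (orderOf x.1) + r ≤ n) by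
    obtain ⟨r, hr, hrn, hx⟩ := this
    obtain ⟨z, rfl, hxz⟩ := exists_vertex_orderOf_eq_prime_edist_le_one hr hx
    exact ⟨z, hr, hrn, hxz⟩
  by_cases hsmall : primePowerSum (orderOf x.1) + 2 ≤ n
  · exact ⟨2, Nat.prime_two, hn, .inr hsmall⟩
  have hnot_prime : ¬ (orderOf x.1).Prime := by
    intro hp
    rw [primePowerSum_prime hp] at hsmall hxn
    obtain h | h : orderOf x.1 = n ∨ orderOf x.1 = n - 1 := by lia
    · exact h₁ (h ▸ hp)
    · exact h₂ (h ▸ hp)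
  exact ⟨_, Nat.minFac_prime hx₁.ne',
    (two_mul_minFac_le_primePowerSum hx₁ hnot_prime).trans hxn, .inl (Nat.minFac_dvd _)⟩

lemma edist_le_three (hn : 4 ≤ n) (h₁ : ¬ n.Prime) (h₂ : ¬ (n - 1).Prime)
    (x y : {x : Equiv.Perm (Fin n) // x ≠ 1}) :
    (reducedOrderSuperCommutingGraph n).edist x y ≤ 3 := by
  obtain ⟨u, hu, hun, hxu⟩ := exists_vertex_prime_orderOf_le_half hn h₁ h₂ x
  obtain ⟨v, hv, hvn, hyv⟩ := exists_vertex_prime_orderOf_le_half hn h₁ h₂ y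
  have huv : (reducedOrderSuperCommutingGraph n).edist u v ≤ 1 := by
    rw [edist_le_one_iff_of_prime_orderOf hv, primePowerSum_prime hu]
    lia
  have hxv : (reducedOrderSuperCommutingGraph n).edist x v ≤ 2 :=
    edist_le_two_iff_exists_edist_le_one.2 ⟨u, hxu, huv⟩
  calc (reducedOrderSuperCommutingGraph n).edist x y
      ≤ (reducedOrderSuperCommutingGraph n).edist x v +
          (reducedOrderSuperCommutingGraph n).edist v y := SimpleGraph.edist_triangle
    _ ≤ 2 + 1 := add_le_add hxv (SimpleGraph.edist_comm ▸ hyv)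
    _ = 3 := two_add_one_eq_three

lemma le_primePowerSum_or_of_two_lt_edist {x y : {x : Equiv.Perm (Fin n) // x ≠ 1}}
    (h : 2 < (reducedOrderSuperCommutingGraph n).edist x y) :
    n - 1 ≤ primePowerSum (orderOf x.1) ∨ n - 1 ≤ primePowerSum (orderOf y.1) := by
  contrapose! h
  exact (edist_le_two_iff_exists_prime x y).2
    ⟨2, Nat.prime_two, .inr (by lia), .inr (by lia)⟩

lemma two_lt_edist_iff_of_le_primePowerSum {x y : {x : Equiv.Perm (Fin n) // x ≠ 1}}
    (hx : n - 1 ≤ primePowerSum (orderOf x.1)) :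
    2 < (reducedOrderSuperCommutingGraph n).edist x y ↔
      (orderOf x.1).Coprime (orderOf y.1) ∧
        ∀ p ∈ (orderOf x.1).primeFactors, n < p + primePowerSum (orderOf y.1) := by
  rw [← not_le, edist_le_two_iff_exists_prime]
  constructor
  · intro hnone
    refine ⟨Nat.coprime_of_dvd fun p hp hpx hpy ↦ hnone ⟨p, hp, .inl hpx, .inl hpy⟩,
      fun p hp ↦ ?_⟩
    by_contra! hle
    exact hnone ⟨p, Nat.prime_of_mem_primeFactors hp, .inl (Nat.dvd_of_mem_primeFactors hp),
      .inr (by lia)⟩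
  · rintro ⟨hcop, hlt⟩ ⟨r, hr, hrx, hry⟩
    have hrx : r ∣ orderOf x.1 := hrx.resolve_right (by have := hr.two_le; lia)
    rcases hry with hry | hry
    · exact Nat.not_coprime_of_dvd_of_dvd hr.one_lt hrx hry hcop
    · have := hlt r (Nat.mem_primeFactors.2 ⟨hr, hrx, (orderOf_pos x.1).ne'⟩)
      lia

lemma exists_two_lt_edist_iff :
    (∃ x y, 2 < (reducedOrderSuperCommutingGraph n).edist x y) ↔
      ∃ a b : ℕ, 1 < a ∧ 1 < b ∧ a.Coprime b ∧
        (primePowerSum a = n - 1 ∨ primePowerSum a = n) ∧ primePowerSum b ≤ n ∧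
        ∀ p ∈ a.primeFactors, n < p + primePowerSum b := by
  constructor
  · rintro ⟨x, y, hxy⟩
    wlog hx : n - 1 ≤ primePowerSum (orderOf x.1) generalizing x y
    · exact this y x (SimpleGraph.edist_comm ▸ hxy)
        ((le_primePowerSum_or_of_two_lt_edist hxy).resolve_left hx)
    obtain ⟨hcop, hlt⟩ := (two_lt_edist_iff_of_le_primePowerSum hx).1 hxy
    have hxn := primePowerSum_orderOf_vertex_le x
    exact ⟨orderOf x.1, orderOf y.1, one_lt_orderOf_vertex x, one_lt_orderOf_vertex y, hcop,
      by lia, primePowerSum_orderOf_vertex_le y, hlt⟩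
  · rintro ⟨a, b, ha, hb, hcop, hsa, hsb, hlt⟩
    obtain ⟨x, rfl⟩ := exists_vertex_orderOf_eq (n := n) ha (by lia)
    obtain ⟨y, rfl⟩ := exists_vertex_orderOf_eq hb hsb
    exact ⟨x, y, (two_lt_edist_iff_of_le_primePowerSum (by lia)).2 ⟨hcop, hlt⟩⟩

lemma diam_eq_three_iff_exists_two_lt_edist (hn : 4 ≤ n) (h₁ : ¬ n.Prime) (h₂ : ¬ (n - 1).Prime) :
    (reducedOrderSuperCommutingGraph n).diam = 3 ↔
      ∃ x y, 2 < (reducedOrderSuperCommutingGraph n).edist x y :=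
  diam_eq_succ_iff_exists_lt_edist (k := 2) (edist_le_three hn h₁ h₂)

end ReducedOrderSuperCommutingGraph

/-- **Proposition (Dalal–Mukherjee–Patra).**  Let `n ≥ 4` with neither `n` nor `n - 1`
prime.  Then `Δᵒ(Sₙ)*` has diameter `3` iff there are nonempty disjoint sets `T₁, T₂`
of primes `≤ n` and positive exponents `α, β` with
`M₁ = ∑_{p ∈ T₁} p ^ α p ∈ {n - 1, n}`, `M₂ = ∑_{q ∈ T₂} q ^ β q ≤ n`, and
`p + M₂ > n` for every `p ∈ T₁`. -/
theorem stmt12 (n : ℕ) (hn : 4 ≤ n) (h₁ : ¬ n.Prime) (h₂ : ¬ (n - 1).Prime) :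
    (reducedOrderSuperCommutingGraph n).diam = 3 ↔
      ∃ (T₁ T₂ : Finset ℕ) (α β : ℕ → ℕ),
        T₁.Nonempty ∧ T₂.Nonempty ∧ Disjoint T₁ T₂ ∧
        (∀ p ∈ T₁, p.Prime ∧ p ≤ n) ∧ (∀ q ∈ T₂, q.Prime ∧ q ≤ n) ∧
        (∀ p ∈ T₁, 0 < α p) ∧ (∀ q ∈ T₂, 0 < β q) ∧
        (∑ p ∈ T₁, p ^ α p = n - 1 ∨ ∑ p ∈ T₁, p ^ α p = n) ∧
        (∑ q ∈ T₂, q ^ β q ≤ n) ∧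
        (∀ p ∈ T₁, n < p + ∑ q ∈ T₂, q ^ β q) := by
  rw [diam_eq_three_iff_exists_two_lt_edist hn h₁ h₂, exists_two_lt_edist_iff]
  constructor
  · rintro ⟨a, b, ha, hb, hcop, hsa, hsb, hlt⟩
    exact ⟨a.primeFactors, b.primeFactors, a.factorization, b.factorization,
      Nat.nonempty_primeFactors.2 ha, Nat.nonempty_primeFactors.2 hb, hcop.disjoint_primeFactors,
      fun p hp ↦ ⟨Nat.prime_of_mem_primeFactors hp,
        le_of_mem_primeFactors_of_primePowerSum_le hp (by lia)⟩,
      fun q hq ↦ ⟨Nat.prime_of_mem_primeFactors hq,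
        le_of_mem_primeFactors_of_primePowerSum_le hq hsb⟩,
      fun p hp ↦ Nat.pos_of_ne_zero (Finsupp.mem_support_iff.1 hp),
      fun q hq ↦ Nat.pos_of_ne_zero (Finsupp.mem_support_iff.1 hq), hsa, hsb, hlt⟩
  · rintro ⟨T₁, T₂, α, β, hne₁, hne₂, hdisj, hT₁, hT₂, hα, hβ, hM₁, hM₂, hlt⟩
    have hfac₁ := primeFactors_prod_prime_pow (fun p hp ↦ (hT₁ p hp).1) hα
    have hfac₂ := primeFactors_prod_prime_pow (fun q hq ↦ (hT₂ q hq).1) hβ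
    have hone₁ := Nat.nonempty_primeFactors.1 (hfac₁.symm ▸ hne₁)
    have hone₂ := Nat.nonempty_primeFactors.1 (hfac₂.symm ▸ hne₂)
    refine ⟨∏ p ∈ T₁, p ^ α p, ∏ q ∈ T₂, q ^ β q, hone₁, hone₂, ?_, ?_⟩
    · rwa [← Nat.disjoint_primeFactors (by lia) (by lia), hfac₁, hfac₂]
    · rw [primePowerSum_prod_prime_pow (fun p hp ↦ (hT₁ p hp).1) hα,
        primePowerSum_prod_prime_pow (fun q hq ↦ (hT₂ q hq).1) hβ, hfac₁]
      exact ⟨hM₁, hM₂, hlt⟩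
end

section
/- The coefficients γ_m of the polynomial ∏_{i=1}^{13}(1 + x^{q_{4,1}(i)}) = (1+x⁵)(1+x¹³)(1+x¹⁷)(1+x²⁹)(1+x³⁷)(1+x⁴¹)(1+x⁵³)(1+x⁶¹)(1+x⁷³)(1+x⁸⁹)(1+x⁹⁷)(1+x¹⁰¹)(1+x¹⁰⁹) satisfy γ_m ≥ 1 for every m with 122 ≤ m ≤ 603, while γ₁₂₁ = γ₆₀₄ = 0. -/
open Polynomial

/-- The generating polynomial `∏_{i=1}^{13} (1 + x ^ q_{4,1}(i))` of the first `13`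
primes congruent to `1` modulo `4`, namely `5, 13, 17, 29, 37, 41, 53, 61, 73, 89, 97,
101, 109`. -/
noncomputable def genPoly41 : Polynomial ℕ :=
  (1 + X ^ 5) * (1 + X ^ 13) * (1 + X ^ 17) * (1 + X ^ 29) * (1 + X ^ 37) *
    (1 + X ^ 41) * (1 + X ^ 53) * (1 + X ^ 61) * (1 + X ^ 73) * (1 + X ^ 89) *
    (1 + X ^ 97) * (1 + X ^ 101) * (1 + X ^ 109)

section SubsetSums

variable {R : Type*} [Semiring R] [PartialOrder R] [CanonicallyOrderedAdd R]

theorem coeff_one_add_X_pow_mul_ne_zero_iff (p : R[X]) (q m : ℕ) :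
    ((1 + X ^ q) * p).coeff m ≠ 0 ↔ p.coeff m ≠ 0 ∨ q ≤ m ∧ p.coeff (m - q) ≠ 0 := by
  rw [add_mul, one_mul, coeff_add, coeff_X_pow_mul', Ne, add_eq_zero, not_and_or,
    ite_eq_right_iff, Classical.not_imp]

/-- The set of subset sums of `l`, encoded as a bit mask: bit `m` is set exactly when `m` is the
sum of a sublist of `l`. Allowing a further summand `q` superimposes on the mask its shift by `q`.
This makes membership of a given `m` cheap to evaluate in the kernel. -/
def subsetSumMask (l : List ℕ) : ℕ :=
  l.foldr (fun q b => b ||| b <<< q) 1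

theorem testBit_subsetSumMask_cons (q : ℕ) (l : List ℕ) (m : ℕ) :
    (subsetSumMask (q :: l)).testBit m ↔
      (subsetSumMask l).testBit m ∨ q ≤ m ∧ (subsetSumMask l).testBit (m - q) := by
  simp [subsetSumMask, Nat.testBit_shiftLeft]

theorem coeff_prod_one_add_X_pow_ne_zero_iff [Nontrivial R] (l : List ℕ) (m : ℕ) :
    (l.map fun q => (1 + X ^ q : R[X])).prod.coeff m ≠ 0 ↔ (subsetSumMask l).testBit m := by
  induction l generalizing m with
  | nil => simp [subsetSumMask, coeff_one, Nat.testBit_one_eq_true_iff_self_eq_zero]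
  | cons q l ih =>
    rw [List.map_cons, List.prod_cons, coeff_one_add_X_pow_mul_ne_zero_iff,
      testBit_subsetSumMask_cons, ih, ih]

end SubsetSums

/-- The exponents `q_{4,1}(1), …, q_{4,1}(13)` of `genPoly41`, that is, the first `13` primes
congruent to `1` modulo `4`, listed explicitly so that their subset sums can be computed. -/
def primes41 : List ℕ :=
  [5, 13, 17, 29, 37, 41, 53, 61, 73, 89, 97, 101, 109]

theorem genPoly41_eq_prod_primes41 :
    genPoly41 = (primes41.map fun q => (1 + X ^ q : ℕ[X])).prod := by
  simp only [genPoly41, primes41, List.map_cons, List.map_nil, List.prod_cons, List.prod_nil,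
    mul_one, mul_assoc]

theorem coeff_genPoly41_ne_zero_iff (m : ℕ) :
    genPoly41.coeff m ≠ 0 ↔ (subsetSumMask primes41).testBit m := by
  rw [genPoly41_eq_prod_primes41, coeff_prod_one_add_X_pow_ne_zero_iff]

theorem coeff_genPoly41_eq_zero_iff (m : ℕ) :
    genPoly41.coeff m = 0 ↔ (subsetSumMask primes41).testBit m = false := by
  rw [← not_iff_not, Bool.not_eq_false, ← coeff_genPoly41_ne_zero_iff]

theorem testBit_subsetSumMask_primes41_of_mem_Icc :
    ∀ m ∈ Finset.Icc 122 603, (subsetSumMask primes41).testBit m := by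
  decide +kernel

/-- The coefficients `γ m` of `(1+x⁵)(1+x¹³)⋯(1+x¹⁰¹)(1+x¹⁰⁹)` satisfy `γ m ≥ 1` for
every `122 ≤ m ≤ 603`, while `γ 121 = γ 604 = 0`. -/
theorem stmt14 :
    (∀ m, 122 ≤ m → m ≤ 603 → 1 ≤ genPoly41.coeff m) ∧
      genPoly41.coeff 121 = 0 ∧ genPoly41.coeff 604 = 0 := by
  refine ⟨fun m hm_ge hm_le => ?_, ?_, ?_⟩
  · rw [Nat.one_le_iff_ne_zero, coeff_genPoly41_ne_zero_iff]
    exact testBit_subsetSumMask_primes41_of_mem_Icc m (Finset.mem_Icc.mpr ⟨hm_ge, hm_le⟩)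
  · rw [coeff_genPoly41_eq_zero_iff]
    decide +kernel
  · rw [coeff_genPoly41_eq_zero_iff]
    decide +kernel
end
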